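/- arXiv:1807.09563 — 8 statements merged into one kernel-verified Lean document; each statement's English description precedes it below -/
import Mathlib

section
/- (Sokhotski–Plemelj formula) For every Schwartz function f : ℝ → ℂ and every x₀ ∈ ℝ, the limit as ε → 0⁺ of ∫_ℝ f(x)/(x − x₀ + iε) dx exists and equals p.v.∫_ℝ f(x)/(x − x₀) dx − iπ f(x₀); likewise the limit as ε → 0⁺ of ∫_ℝ f(x)/(x − x₀ − iε) dx equals p.v.∫_ℝ f(x)/(x − x₀) dx + iπ f(x₀). -/
open MeasureTheory Filter

/-!
After translating `x₀` to `0`, write `1 / (t ± iε) = t / (t² + ε²) ∓ iε / (t² + ε²)`.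

For the first kernel, folding the line onto `(0, ∞)` by `t ↦ -t` turns the integral of
`g(t) t / (t² + ε²)` into that of `t² / (t² + ε²) · (g(t) - g(-t)) / t`. The symmetric difference
quotient is integrable on `(0, ∞)`: it is bounded because `g` is Lipschitz, and for `t ≥ 1` it is at
most `|g(t)| + |g(-t)|`. Dominated convergence then gives the limit
`∫_{(0,∞)} (g(t) - g(-t)) / t dt`, and the same folding shows that the symmetric truncations of
`∫ g(t) / t dt` have this limit too, so it is the principal value.

The second kernel is the Poisson kernel: substituting `t = ε s` and using dominated convergence,
`∫ ε g(t) / (t² + ε²) dt = ∫ g(ε s) / (1 + s²) ds → π g(0)`.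
-/

/-- The symmetric difference quotient at `0`, whose integral over `(0, ∞)` is the principal value
of `g(t) / t`. -/
noncomputable def symmQuot (g : SchwartzMap ℝ ℂ) (t : ℝ) : ℂ := (g t - g (-t)) / t

lemma measurable_symmQuot (g : SchwartzMap ℝ ℂ) : Measurable (symmQuot g) := by
  have hg : Measurable g := g.continuous.measurable
  unfold symmQuot
  fun_prop

lemma integrableOn_symmQuot (g : SchwartzMap ℝ ℂ) :
    IntegrableOn (symmQuot g) (Set.Ioi 0) := by
  obtain ⟨C, hC, hb⟩ := g.decay 0 1
  have hlip : LipschitzWith ⟨C, hC.le⟩ g := by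
    refine lipschitzWith_of_nnnorm_deriv_le g.differentiable fun x => ?_
    have := hb x
    rw [norm_iteratedFDeriv_eq_norm_iteratedDeriv, iteratedDeriv_one, pow_zero, one_mul] at this
    exact this
  have hbound : Integrable (fun t : ℝ => (Set.Ioc (0 : ℝ) 1).indicator (fun _ => 2 * C) t +
      (‖g t‖ + ‖g (-t)‖)) := by
    refine Integrable.add ?_ (g.integrable.norm.add g.integrable.comp_neg.norm)
    exact (integrable_indicator_iff measurableSet_Ioc).2
      (integrableOn_const measure_Ioc_lt_top.ne)
  refine hbound.integrableOn.mono' (measurable_symmQuot g).aestronglyMeasurable ?_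
  filter_upwards [ae_restrict_mem measurableSet_Ioi] with t (ht : 0 < t)
  have hn : ‖symmQuot g t‖ = ‖g t - g (-t)‖ / t := by
    simp [symmQuot, abs_of_pos ht]
  rw [hn, div_le_iff₀ ht]
  have h0 : 0 ≤ ‖g t‖ + ‖g (-t)‖ := by positivity
  by_cases h1 : t ≤ 1
  · rw [Set.indicator_of_mem (show t ∈ Set.Ioc 0 1 from ⟨ht, h1⟩)]
    have := hlip.norm_sub_le t (-t)
    rw [Real.norm_eq_abs, sub_neg_eq_add, abs_of_pos (by linarith : 0 < t + t)] at this
    change _ ≤ C * (t + t) at this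
    nlinarith [mul_nonneg h0 ht.le]
  · rw [Set.indicator_of_notMem (fun h => h1 h.2)]
    nlinarith [norm_sub_le (g t) (g (-t))]

lemma integral_fold {h : ℝ → ℂ} {δ : ℝ} (h₁ : IntegrableOn h (Set.Ioi δ))
    (h₂ : IntegrableOn h (Set.Iio (-δ))) :
    (∫ t in Set.Ioi δ, h t) + ∫ t in Set.Iio (-δ), h t = ∫ t in Set.Ioi δ, (h t + h (-t)) := by
  have h₃ : IntegrableOn (fun t => h (-t)) (Set.Ioi δ) := by
    simpa using h₂.comp_neg
  rw [integral_add h₁ h₃, integral_comp_neg_Ioi, integral_Iic_eq_integral_Iio]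

lemma truncation_eq (g : SchwartzMap ℝ ℂ) {δ : ℝ} (hδ : 0 < δ) :
    (∫ t in Set.Ioi δ, g t / (t : ℂ)) + ∫ t in Set.Iio (-δ), g t / (t : ℂ) =
      ∫ t in Set.Ioi δ, symmQuot g t := by
  have hg : Measurable g := g.continuous.measurable
  have key : ∀ s : Set ℝ, MeasurableSet s → (∀ t ∈ s, δ ≤ |t|) →
      IntegrableOn (fun t : ℝ => g t / (t : ℂ)) s := by
    intro s hs hst
    refine (g.integrable.norm.div_const δ).integrableOn.mono'
      (by fun_prop : Measurable _).aestronglyMeasurable ?_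
    filter_upwards [ae_restrict_mem hs] with t ht
    rw [norm_div, Complex.norm_real, Real.norm_eq_abs]
    gcongr
    exact hst t ht
  rw [integral_fold]
  · congr 1
    ext t
    simp only [symmQuot, Complex.ofReal_neg]
    ring
  · exact key _ measurableSet_Ioi fun t (ht : δ < t) => ht.le.trans (le_abs_self t)
  · exact key _ measurableSet_Iio fun t (ht : t < -δ) => by
      have := neg_le_abs t
      linarith

lemma tendsto_truncation (g : SchwartzMap ℝ ℂ) :
    Tendsto (fun δ : ℝ => ∫ t in Set.Ioi δ, symmQuot g t)
      (nhdsWithin 0 (Set.Ioi 0)) (nhds (∫ t in Set.Ioi 0, symmQuot g t)) := by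
  have h : Tendsto (fun δ : ℝ => ∫ t in Set.Ioi 0, (Set.Ioi δ).indicator (symmQuot g) t)
      (nhdsWithin 0 (Set.Ioi 0)) (nhds (∫ t in Set.Ioi 0, symmQuot g t)) := by
    refine tendsto_integral_filter_of_dominated_convergence (fun t => ‖symmQuot g t‖)
      (Eventually.of_forall fun δ =>
        ((measurable_symmQuot g).indicator measurableSet_Ioi).aestronglyMeasurable)
      (Eventually.of_forall fun δ => Eventually.of_forall fun t =>
        norm_indicator_le_norm_self _ _)
      (integrableOn_symmQuot g).norm ?_
    filter_upwards [ae_restrict_mem measurableSet_Ioi] with t (ht : 0 < t)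
    refine tendsto_const_nhds.congr' ?_
    filter_upwards [nhdsWithin_le_nhds (Iio_mem_nhds ht)] with δ hδ
    exact (Set.indicator_of_mem (show t ∈ Set.Ioi δ from hδ) _).symm
  refine h.congr' ?_
  filter_upwards [self_mem_nhdsWithin] with δ (hδ : 0 < δ)
  rw [setIntegral_indicator measurableSet_Ioi,
    Set.inter_eq_right.2 (Set.Ioi_subset_Ioi hδ.le)]

/-- The kernel `t / (t² + ε²)` is bounded by `1 / ε`. -/
lemma integrable_oddKernel (g : SchwartzMap ℝ ℂ) {ε : ℝ} (hε : 0 < ε) :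
    Integrable (fun t : ℝ => ((t / (t ^ 2 + ε ^ 2) : ℝ) : ℂ) * g t) := by
  refine g.integrable.bdd_mul (c := 1 / ε)
    (by fun_prop : Measurable _).aestronglyMeasurable (Eventually.of_forall fun t => ?_)
  rw [Complex.norm_real, Real.norm_eq_abs, abs_div, abs_of_pos (by positivity : 0 < t ^ 2 + ε ^ 2),
    div_le_div_iff₀ (by positivity) hε]
  nlinarith [sq_nonneg (|t| - ε), sq_abs t, abs_nonneg t, sq_nonneg t]

/-- The kernel `ε / (t² + ε²)` is bounded by `1 / ε`. -/
lemma integrable_poissonKernel (g : SchwartzMap ℝ ℂ) {ε : ℝ} (hε : 0 < ε) :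
    Integrable (fun t : ℝ => ((ε / (t ^ 2 + ε ^ 2) : ℝ) : ℂ) * g t) := by
  refine g.integrable.bdd_mul (c := 1 / ε)
    (by fun_prop : Measurable _).aestronglyMeasurable (Eventually.of_forall fun t => ?_)
  rw [Complex.norm_real, Real.norm_eq_abs, abs_of_pos (by positivity),
    div_le_div_iff₀ (by positivity) hε]
  nlinarith [sq_nonneg t]

lemma tendsto_oddKernel (g : SchwartzMap ℝ ℂ) :
    Tendsto (fun ε : ℝ => ∫ t : ℝ, ((t / (t ^ 2 + ε ^ 2) : ℝ) : ℂ) * g t)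
      (nhdsWithin 0 (Set.Ioi 0)) (nhds (∫ t in Set.Ioi 0, symmQuot g t)) := by
  have h : Tendsto
      (fun ε : ℝ => ∫ t in Set.Ioi 0, ((t ^ 2 / (t ^ 2 + ε ^ 2) : ℝ) : ℂ) * symmQuot g t)
      (nhdsWithin 0 (Set.Ioi 0)) (nhds (∫ t in Set.Ioi 0, symmQuot g t)) := by
    have hm := measurable_symmQuot g
    refine tendsto_integral_filter_of_dominated_convergence (fun t => ‖symmQuot g t‖)
      (Eventually.of_forall fun ε => (by fun_prop : Measurable _).aestronglyMeasurable)
      (Eventually.of_forall fun ε => Eventually.of_forall fun t => ?_)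
      (integrableOn_symmQuot g).norm ?_
    · rw [norm_mul, Complex.norm_real, Real.norm_eq_abs, abs_of_nonneg (by positivity)]
      exact mul_le_of_le_one_left (norm_nonneg _)
        (div_le_one_of_le₀ (by nlinarith [sq_nonneg ε]) (by positivity))
    · filter_upwards [ae_restrict_mem measurableSet_Ioi] with t (ht : 0 < t)
      have hc : ContinuousAt
          (fun ε : ℝ => ((t ^ 2 / (t ^ 2 + ε ^ 2) : ℝ) : ℂ) * symmQuot g t) 0 := by
        have h0 : t ^ 2 + (0 : ℝ) ^ 2 ≠ 0 := by positivity
        fun_prop (disch := exact h0)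
      have := hc.tendsto.mono_left (nhdsWithin_le_nhds (s := Set.Ioi (0 : ℝ)))
      simpa [ht.ne'] using this
  refine h.congr' ?_
  filter_upwards [self_mem_nhdsWithin] with ε (hε : 0 < ε)
  have hi := integrable_oddKernel g hε
  rw [← intervalIntegral.integral_Iic_add_Ioi (b := 0) hi.integrableOn hi.integrableOn, add_comm,
    integral_Iic_eq_integral_Iio]
  have hf := integral_fold (δ := 0) hi.integrableOn hi.integrableOn
  rw [neg_zero] at hf
  rw [hf]
  refine setIntegral_congr_fun measurableSet_Ioi fun t (ht : 0 < t) => ?_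
  have h1 : (t : ℂ) ≠ 0 := by exact_mod_cast ht.ne'
  have h2 : (t : ℂ) ^ 2 + (ε : ℂ) ^ 2 ≠ 0 := by
    exact_mod_cast (by positivity : t ^ 2 + ε ^ 2 ≠ 0)
  simp only [symmQuot]
  push_cast
  rw [neg_sq]
  field_simp
  ring

lemma tendsto_poissonKernel (g : SchwartzMap ℝ ℂ) :
    Tendsto (fun ε : ℝ => ∫ t : ℝ, ((ε / (t ^ 2 + ε ^ 2) : ℝ) : ℂ) * g t)
      (nhdsWithin 0 (Set.Ioi 0)) (nhds (Real.pi * g 0)) := by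
  have hg : Continuous g := g.continuous
  have h : Tendsto (fun ε : ℝ => ∫ s : ℝ, (((1 + s ^ 2)⁻¹ : ℝ) : ℂ) * g (ε * s))
      (nhdsWithin 0 (Set.Ioi 0)) (nhds (∫ s : ℝ, (((1 + s ^ 2)⁻¹ : ℝ) : ℂ) * g 0)) := by
    refine tendsto_integral_filter_of_dominated_convergence
      (fun s => (1 + s ^ 2)⁻¹ * SchwartzMap.seminorm ℝ 0 0 g)
      (Eventually.of_forall fun ε => ?_)
      (Eventually.of_forall fun ε => Eventually.of_forall fun s => ?_)
      (integrable_inv_one_add_sq.mul_const _) (Eventually.of_forall fun s => ?_)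
    · have hm : Measurable g := hg.measurable
      exact (by fun_prop : Measurable _).aestronglyMeasurable
    · rw [norm_mul, Complex.norm_real, Real.norm_eq_abs, abs_of_nonneg (by positivity)]
      gcongr
      exact SchwartzMap.norm_le_seminorm ℝ g _
    · have hc : Continuous (fun ε : ℝ => (((1 + s ^ 2)⁻¹ : ℝ) : ℂ) * g (ε * s)) := by fun_prop
      simpa using (hc.tendsto 0).mono_left (nhdsWithin_le_nhds (s := Set.Ioi (0 : ℝ)))
  rw [integral_mul_const, integral_complex_ofReal, integral_univ_inv_one_add_sq] at h
  refine h.congr' ?_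
  filter_upwards [self_mem_nhdsWithin] with ε (hε : 0 < ε)
  have hs := Measure.integral_comp_mul_left
    (fun t : ℝ => ((ε / (t ^ 2 + ε ^ 2) : ℝ) : ℂ) * g t) ε
  rw [abs_of_pos (by positivity), eq_inv_smul_iff₀ hε.ne', ← integral_smul] at hs
  rw [← hs]
  congr 1
  ext s
  have h1 : (ε : ℂ) ≠ 0 := by exact_mod_cast hε.ne'
  have h2 : (1 : ℂ) + (s : ℂ) ^ 2 ≠ 0 := by
    exact_mod_cast (by positivity : 1 + s ^ 2 ≠ 0)
  have h3 : ((ε : ℂ) * s) ^ 2 + (ε : ℂ) ^ 2 = (ε : ℂ) ^ 2 * (1 + (s : ℂ) ^ 2) := by ring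
  rw [Complex.real_smul]
  push_cast
  rw [h3]
  field_simp

/-- Decomposition of `1 / (t + iσε)` for a sign `σ = ±1`, integrated against `g`. -/
lemma integral_resolvent (g : SchwartzMap ℝ ℂ) {σ : ℂ} (hσ : σ ^ 2 = 1) {ε : ℝ} (hε : 0 < ε) :
    ∫ t : ℝ, g t / ((t : ℂ) + σ * (Complex.I * ε)) =
      (∫ t : ℝ, ((t / (t ^ 2 + ε ^ 2) : ℝ) : ℂ) * g t) -
        σ * Complex.I * ∫ t : ℝ, ((ε / (t ^ 2 + ε ^ 2) : ℝ) : ℂ) * g t := by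
  rw [← integral_const_mul, ← integral_sub (integrable_oddKernel g hε)
    ((integrable_poissonKernel g hε).const_mul _)]
  congr 1
  ext t
  have h2 : (t : ℂ) ^ 2 + (ε : ℂ) ^ 2 ≠ 0 := by
    exact_mod_cast (by positivity : t ^ 2 + ε ^ 2 ≠ 0)
  have hprod : ((t : ℂ) + σ * (Complex.I * ε)) * (t - σ * (Complex.I * ε)) =
      (t : ℂ) ^ 2 + (ε : ℂ) ^ 2 := by
    linear_combination (-(ε : ℂ) ^ 2 * σ ^ 2) * Complex.I_sq + (ε : ℂ) ^ 2 * hσ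
  have h1 : (t : ℂ) + σ * (Complex.I * ε) ≠ 0 := left_ne_zero_of_mul (hprod ▸ h2)
  push_cast
  rw [div_eq_iff h1]
  field_simp
  linear_combination (-g t) * hprod

lemma tendsto_resolvent (g : SchwartzMap ℝ ℂ) {σ : ℂ} (hσ : σ ^ 2 = 1) :
    Tendsto (fun ε : ℝ => ∫ t : ℝ, g t / ((t : ℂ) + σ * (Complex.I * ε)))
      (nhdsWithin 0 (Set.Ioi 0))
      (nhds ((∫ t in Set.Ioi 0, symmQuot g t) - σ * Complex.I * (Real.pi * g 0))) := by
  refine ((tendsto_oddKernel g).sub ((tendsto_poissonKernel g).const_mul _)).congr' ?_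
  filter_upwards [self_mem_nhdsWithin] with ε (hε : 0 < ε)
  exact (integral_resolvent g hσ hε).symm

/-- The Sokhotski–Plemelj formula: for a Schwartz function `f` and `x₀ ∈ ℝ`, the principal
value `p.v.∫ f(x)/(x − x₀) dx` exists (as a limit `PV` of symmetric truncations), and
`lim_{ε→0⁺} ∫ f(x)/(x − x₀ ± iε) dx = PV ∓ iπ f(x₀)`. -/
theorem sokhotski_plemelj (f : SchwartzMap ℝ ℂ) (x₀ : ℝ) :
    ∃ PV : ℂ,
      Tendsto
        (fun δ : ℝ =>
          (∫ x in Set.Ioi (x₀ + δ), f x / ((x : ℂ) - (x₀ : ℂ))) +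
          ∫ x in Set.Iio (x₀ - δ), f x / ((x : ℂ) - (x₀ : ℂ)))
        (nhdsWithin 0 (Set.Ioi 0)) (nhds PV) ∧
      Tendsto
        (fun ε : ℝ => ∫ x : ℝ, f x / ((x : ℂ) - (x₀ : ℂ) + Complex.I * ε))
        (nhdsWithin 0 (Set.Ioi 0))
        (nhds (PV - Complex.I * (Real.pi : ℂ) * f x₀)) ∧
      Tendsto
        (fun ε : ℝ => ∫ x : ℝ, f x / ((x : ℂ) - (x₀ : ℂ) - Complex.I * ε))
        (nhdsWithin 0 (Set.Ioi 0))
        (nhds (PV + Complex.I * (Real.pi : ℂ) * f x₀)) := by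
  set g : SchwartzMap ℝ ℂ := SchwartzMap.compSubConstCLM ℂ (-x₀) f with hgdef
  have hg : ∀ x, g (x - x₀) = f x := fun x => by simp [hgdef]
  have hg0 : g 0 = f x₀ := by simpa using hg x₀
  have hmp := measurePreserving_sub_right (volume : Measure ℝ) x₀
  have hme : MeasurableEmbedding (fun x : ℝ => x - x₀) :=
    (Homeomorph.subRight x₀).measurableEmbedding
  refine ⟨∫ t in Set.Ioi 0, symmQuot g t, ?_, ?_, ?_⟩
  · refine (tendsto_truncation g).congr' ?_
    filter_upwards [self_mem_nhdsWithin] with δ (hδ : 0 < δ)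
    rw [← truncation_eq g hδ, ← hmp.setIntegral_preimage_emb hme _ (Set.Ioi δ),
      ← hmp.setIntegral_preimage_emb hme _ (Set.Iio (-δ)), Set.preimage_sub_const_Ioi, Set.preimage_sub_const_Iio]
    simp only [hg, Complex.ofReal_sub]
    rw [add_comm δ, neg_add_eq_sub]
  · convert tendsto_resolvent g (σ := 1) (by norm_num) using 2 with ε
    · symm
      rw [← integral_sub_right_eq_self _ x₀]
      simp only [hg, Complex.ofReal_sub, one_mul]
    · rw [hg0]
      ring_nf
  · convert tendsto_resolvent g (σ := -1) (by norm_num) using 2 with ε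
    · symm
      rw [← integral_sub_right_eq_self _ x₀]
      simp only [hg, Complex.ofReal_sub, neg_one_mul, ← sub_eq_add_neg]
    · rw [hg0]
      ring_nf
end

section
/- For every Schwartz function f : ℝ → ℂ, the Hadamard finite part of ∫ f(x)/x² dx exists: the limit as ε → 0⁺ of ( ∫_{−∞}^{−ε} f(x)/x² dx + ∫_{ε}^{∞} f(x)/x² dx − 2 f(0)/ε ) exists in ℂ. -/
open MeasureTheory Filter

/-!
Fold the two half-lines together by `x ↦ -x` and use `∫_ε^∞ x⁻² dx = 1/ε`: the regularized
expression becomes `∫_ε^∞ (f x + f (-x) - 2 f 0) / x² dx`.  The numerator is even and vanishes at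
`0`, so Taylor's formula bounds it by `C x²` near `0`, and it is bounded at infinity because `f`
is.  Hence the folded integrand is integrable on `(0, ∞)` (`integrableOn_foldedIntegrand`), and
the truncated integrals converge to the full one.
-/

/-- The value of `f(x)/x²` symmetrized over `±x`, with the singular part `2 f(0)/x²` removed. -/
noncomputable def foldedIntegrand (f : SchwartzMap ℝ ℂ) (x : ℝ) : ℂ :=
  (f x + f (-x) - 2 * f 0) / (x : ℂ) ^ 2

/-- Taylor's formula at order two: the linear term drops out since `f x + f (-x)` is even. -/
theorem exists_bound_near_zero (f : SchwartzMap ℝ ℂ) :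
    ∃ C : ℝ, ∀ x ∈ Set.Icc (0 : ℝ) 1, ‖f x + f (-x) - 2 * f 0‖ ≤ C * x ^ 2 := by
  set g : ℝ → ℂ := fun x => f x + f (-x) - 2 * f 0 with hg
  have hgs : ContDiff ℝ 2 g := by
    have h1 : ContDiff ℝ 2 f := f.smooth 2
    exact (h1.add (h1.comp contDiff_neg)).sub contDiff_const
  have hd : HasDerivAt g 0 0 := by
    have h1 : HasDerivAt f (deriv f 0) 0 := f.differentiable.differentiableAt.hasDerivAt
    have h1' : HasDerivAt f (deriv f 0) (-0) := by simpa using h1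
    have h2 : HasDerivAt (fun x : ℝ => f (-x)) ((-1 : ℝ) • deriv f 0) 0 :=
      h1'.scomp (0 : ℝ) (hasDerivAt_neg 0)
    have h3 := (h1.add h2).sub_const (2 * f 0)
    rw [neg_one_smul, add_neg_cancel] at h3
    exact h3
  obtain ⟨C, hC⟩ := exists_taylor_mean_remainder_bound (n := 1) (zero_le_one (α := ℝ))
    (f := g) (by exact_mod_cast hgs.contDiffOn)
  have hw : derivWithin g (Set.Icc 0 1) 0 = 0 :=
    hd.hasDerivWithinAt.derivWithin
      (uniqueDiffOn_Icc zero_lt_one 0 (by simp))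
  refine ⟨C, fun x hx => ?_⟩
  have hg0 : g 0 = 0 := by simp [hg]; ring
  have := hC x hx
  simpa [taylorWithinEval_succ, iteratedDerivWithin_one, hw, hg0] using this

theorem integrableOn_const_div_sq (c : ℂ) {ε : ℝ} (hε : 0 < ε) :
    IntegrableOn (fun x : ℝ => c / (x : ℂ) ^ 2) (Set.Ioi ε) := by
  have h := (integrableOn_Ioi_rpow_of_lt (a := -2) (by norm_num) hε).ofReal (𝕜 := ℂ)
  refine (h.const_mul c).congr ?_
  filter_upwards [ae_restrict_mem measurableSet_Ioi] with x hx
  have hx0 : 0 < x := hε.trans hx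
  rw [Real.rpow_neg hx0.le]
  norm_num [div_eq_mul_inv]

theorem integral_const_div_sq (c : ℂ) {ε : ℝ} (hε : 0 < ε) :
    ∫ x in Set.Ioi ε, c / (x : ℂ) ^ 2 = c / (ε : ℂ) := by
  have h : ∫ x in Set.Ioi ε, c / (x : ℂ) ^ 2
      = ∫ x in Set.Ioi ε, c * ((x ^ (-2 : ℝ) : ℝ) : ℂ) := by
    refine setIntegral_congr_fun measurableSet_Ioi fun x hx => ?_
    have hx0 : 0 < x := hε.trans hx
    simp only [Real.rpow_neg hx0.le]
    norm_num [div_eq_mul_inv]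
  rw [h, integral_const_mul, integral_complex_ofReal,
    integral_Ioi_rpow_of_lt (by norm_num) hε]
  norm_num [Real.rpow_neg hε.le, div_eq_mul_inv]

theorem integrableOn_div_sq {h : ℝ → ℂ} (hc : Continuous h) {M : ℝ} (hM : ∀ x, ‖h x‖ ≤ M)
    {ε : ℝ} (hε : 0 < ε) :
    IntegrableOn (fun x : ℝ => h x / (x : ℂ) ^ 2) (Set.Ioi ε) := by
  refine Integrable.mono (integrableOn_const_div_sq (M : ℂ) hε) ?_ (ae_of_all _ fun x => ?_)
  · exact (hc.measurable.div (Complex.measurable_ofReal.pow_const 2)).aestronglyMeasurable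
  · rw [norm_div, norm_div]
    gcongr
    exact (hM x).trans (by simpa using le_abs_self M)

theorem exists_schwartz_bound (f : SchwartzMap ℝ ℂ) : ∃ M : ℝ, ∀ x, ‖f x‖ ≤ M :=
  ⟨_, SchwartzMap.norm_le_seminorm ℝ f⟩

theorem integrableOn_foldedIntegrand (f : SchwartzMap ℝ ℂ) :
    IntegrableOn (foldedIntegrand f) (Set.Ioi 0) := by
  have hc : Continuous fun x : ℝ => f x + f (-x) - 2 * f 0 := by
    have := f.continuous
    fun_prop
  obtain ⟨M, hM⟩ := exists_schwartz_bound f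
  obtain ⟨C, hC⟩ := exists_bound_near_zero f
  rw [← Set.Ioc_union_Ioi_eq_Ioi (zero_le_one (α := ℝ))]
  refine IntegrableOn.union ?_ ?_
  · refine Measure.integrableOn_of_bounded (M := C) (by simp) ?_ ?_
    · exact (hc.measurable.div (Complex.measurable_ofReal.pow_const 2)).aestronglyMeasurable
    · filter_upwards [ae_restrict_mem measurableSet_Ioc] with x hx
      have hx2 : 0 < x ^ 2 := pow_pos hx.1 2
      rw [foldedIntegrand, norm_div, norm_pow, Complex.norm_real, Real.norm_eq_abs, sq_abs,
        div_le_iff₀ hx2]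
      exact hC x ⟨hx.1.le, hx.2⟩
  · refine integrableOn_div_sq hc (M := M + M + 2 * M) (fun x => ?_) zero_lt_one
    refine (norm_sub_le _ _).trans (add_le_add ((norm_add_le _ _).trans
      (add_le_add (hM _) (hM _))) ?_)
    simpa using hM 0

theorem truncated_eq_integral_foldedIntegrand (f : SchwartzMap ℝ ℂ) {ε : ℝ} (hε : 0 < ε) :
    (∫ x in Set.Iio (-ε), f x / (x : ℂ) ^ 2) + (∫ x in Set.Ioi ε, f x / (x : ℂ) ^ 2)
      - 2 * f 0 / (ε : ℂ) = ∫ x in Set.Ioi ε, foldedIntegrand f x := by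
  obtain ⟨M, hM⟩ := exists_schwartz_bound f
  have h1 := integrableOn_div_sq f.continuous hM hε
  have h2 := integrableOn_div_sq (f.continuous.comp continuous_neg) (fun x => hM (-x)) hε
  have h3 := integrableOn_const_div_sq (2 * f 0) hε
  have h4 : ∫ x in Set.Iio (-ε), f x / (x : ℂ) ^ 2
      = ∫ x in Set.Ioi ε, (f ∘ Neg.neg) x / (x : ℂ) ^ 2 := by
    rw [← integral_Iic_eq_integral_Iio, ← integral_comp_neg_Ioi]
    simp
  rw [h4, ← integral_const_div_sq _ hε, ← integral_add' h2 h1, ← integral_sub' (h2.add h1) h3]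
  refine integral_congr_ae (ae_of_all _ fun x => ?_)
  simp only [foldedIntegrand, Function.comp_apply, Pi.add_apply, Pi.sub_apply]
  ring

/-- For every Schwartz function `f : ℝ → ℂ`, the Hadamard finite part of `∫ f(x)/x² dx`
exists: `lim_{ε→0⁺} ( ∫_{−∞}^{−ε} f(x)/x² dx + ∫_{ε}^{∞} f(x)/x² dx − 2 f(0)/ε )`
exists in `ℂ`. -/
theorem hadamard_finite_part_exists (f : SchwartzMap ℝ ℂ) :
    ∃ L : ℂ,
      Tendsto
        (fun ε : ℝ =>
          (∫ x in Set.Iio (-ε), f x / (x : ℂ) ^ 2) +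
          (∫ x in Set.Ioi ε, f x / (x : ℂ) ^ 2) - 2 * f 0 / (ε : ℂ))
        (nhdsWithin 0 (Set.Ioi 0)) (nhds L) := by
  refine ⟨∫ x in Set.Ioi 0, foldedIntegrand f x, ?_⟩
  have hcov : AECover (volume.restrict (Set.Ioi (0 : ℝ))) (nhdsWithin 0 (Set.Ioi 0))
      fun ε : ℝ => Set.Ioi ε := aecover_Ioi_of_Ioi (tendsto_id.mono_left nhdsWithin_le_nhds)
  refine (hcov.integral_tendsto_of_countably_generated
    (integrableOn_foldedIntegrand f)).congr' ?_
  filter_upwards [self_mem_nhdsWithin] with ε hε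
  rw [truncated_eq_integral_foldedIntegrand f hε, Measure.restrict_restrict measurableSet_Ioi,
    Set.inter_eq_left.mpr (Set.Ioi_subset_Ioi (le_of_lt hε))]
end

section
/- For every Schwartz function f : ℝ → ℂ, the limit as ε → 0⁺ of ∫_ℝ f(x)/(x + iε)² dx exists and equals f.p.∫ f(x)/x² dx − iπ f′(0), where f′ is the derivative of f and f.p. denotes the Hadamard finite part. (This is the second-order Sokhotski–Plemelj-type formula underlying equation (LHSG) of the paper.) -/
/-!
Folding the line onto `(0, ∞)` and using
`(x + iε)⁻² = ((x² - ε²) - 2iεx) / (x² + ε²)²` splits `∫ f(x) / (x + iε)² dx` into the even part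
`f(x) + f(-x)` against `(x² - ε²) / (x² + ε²)²` and the odd part `f(x) - f(-x)` against
`-2iεx / (x² + ε²)²`.

* Even part: the even kernel has integral zero over `(0, ∞)` (`integral_evenKernel`), so `2 f(0)`
  may be subtracted. The kernel is at most `1 / x²` in absolute value and tends to `1 / x²`, and
  `(f(x) + f(-x) - 2 f(0)) / x²` is integrable by a second-order Taylor bound, so dominated
  convergence gives `∫_0^∞ (f(x) + f(-x) - 2 f(0)) / x² dx` (`tendsto_even`). That integral is the
  finite part, because `∫_ε^∞ 2 f(0) / x² dx = 2 f(0) / ε` (`truncated_eq`, `tendsto_truncated`).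
* Odd part: after `x = εt` the integrand is `-2i (f(εt) - f(-εt)) / ε · t / (1 + t²)²`, which
  converges to `-4i f'(0) t² / (1 + t²)²`, dominated since `f` is Lipschitz. As
  `∫_0^∞ t² / (1 + t²)² dt = π / 4`, the limit is `-iπ f'(0)` (`tendsto_odd`).
-/

open MeasureTheory Filter

namespace SokhotskiPlemelj

open Set

/-! ### Scalar kernels on the half-line -/

/-- The kernel `Re (x + iε)⁻²`. -/
noncomputable def evenKernel (ε x : ℝ) : ℝ := (x ^ 2 - ε ^ 2) / (x ^ 2 + ε ^ 2) ^ 2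

lemma abs_evenKernel_le (ε x : ℝ) : |evenKernel ε x| ≤ (x ^ 2 + ε ^ 2)⁻¹ := by
  unfold evenKernel
  rcases eq_or_ne (x ^ 2 + ε ^ 2) 0 with h | h
  · simp [h]
  have hp : 0 < x ^ 2 + ε ^ 2 := lt_of_le_of_ne (by positivity) h.symm
  rw [abs_div, abs_of_pos (pow_pos hp 2), div_le_iff₀ (pow_pos hp 2)]
  have : (x ^ 2 + ε ^ 2)⁻¹ * (x ^ 2 + ε ^ 2) ^ 2 = x ^ 2 + ε ^ 2 := by field_simp
  rw [this, abs_le]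
  constructor <;> nlinarith [sq_nonneg x, sq_nonneg ε]

lemma continuous_evenKernel {ε : ℝ} (hε : 0 < ε) : Continuous (evenKernel ε) := by
  unfold evenKernel
  refine Continuous.div (by fun_prop) (by fun_prop) fun x => ?_
  positivity

lemma integrable_inv_sq_add_sq {ε : ℝ} (hε : 0 < ε) :
    Integrable (fun x : ℝ => (x ^ 2 + ε ^ 2)⁻¹) := by
  refine (integrable_inv_one_add_sq.const_mul (1 + (ε ^ 2)⁻¹)).mono'
    (Continuous.aestronglyMeasurable ?_) (ae_of_all _ fun x => ?_)
  · exact Continuous.inv₀ (by fun_prop) fun x => by positivity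
  · rw [Real.norm_of_nonneg (by positivity), ← div_eq_mul_inv, inv_eq_one_div,
      div_le_div_iff₀ (by positivity) (by positivity)]
    have : (1 + (ε ^ 2)⁻¹) * (x ^ 2 + ε ^ 2) = (1 + x ^ 2) + (ε ^ 2 + x ^ 2 * (ε ^ 2)⁻¹) := by
      field_simp
      ring
    rw [this]
    have : 0 ≤ ε ^ 2 + x ^ 2 * (ε ^ 2)⁻¹ := by positivity
    linarith

lemma integrable_evenKernel {ε : ℝ} (hε : 0 < ε) : Integrable (evenKernel ε) :=
  (integrable_inv_sq_add_sq hε).mono' (continuous_evenKernel hε).aestronglyMeasurable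
    (ae_of_all _ fun x => by simpa using abs_evenKernel_le ε x)

/-- The function `-x / (x² + ε²)` is a primitive of the kernel; it vanishes at `0` and at `∞`. -/
lemma integral_evenKernel {ε : ℝ} (hε : 0 < ε) : ∫ x in Ioi (0 : ℝ), evenKernel ε x = 0 := by
  have hd : ∀ x : ℝ, HasDerivAt (fun x : ℝ => -x / (x ^ 2 + ε ^ 2)) (evenKernel ε x) x := by
    intro x
    have h : x ^ 2 + ε ^ 2 ≠ 0 := by positivity
    have := (hasDerivAt_id x).neg.div (((hasDerivAt_id x).pow 2).add_const (ε ^ 2)) h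
    refine this.congr_deriv ?_
    unfold evenKernel
    simp
    ring
  have ht : Tendsto (fun x : ℝ => -x / (x ^ 2 + ε ^ 2)) atTop (nhds 0) := by
    have hinv : Tendsto (fun x : ℝ => x⁻¹) atTop (nhds 0) := tendsto_inv_atTop_zero
    refine squeeze_zero_norm' ?_ hinv
    filter_upwards [eventually_gt_atTop 0] with x hx
    rw [norm_div, norm_neg, Real.norm_of_nonneg hx.le, Real.norm_of_nonneg (by positivity),
      inv_eq_one_div, div_le_div_iff₀ (by positivity) hx]
    nlinarith [sq_nonneg ε]
  rw [integral_Ioi_of_hasDerivAt_of_tendsto (hd 0).continuousAt.continuousWithinAt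
    (fun x _ => hd x) (integrable_evenKernel hε).integrableOn ht]
  simp

lemma sq_div_le (t : ℝ) : t ^ 2 / (1 + t ^ 2) ^ 2 ≤ (1 + t ^ 2)⁻¹ := by
  rw [inv_eq_one_div, div_le_div_iff₀ (by positivity) (by positivity)]
  nlinarith [sq_nonneg t]

/-- The function `(arctan t - t / (1 + t²)) / 2` is a primitive of the integrand. -/
lemma integral_sq_div : ∫ t in Ioi (0 : ℝ), t ^ 2 / (1 + t ^ 2) ^ 2 = Real.pi / 4 := by
  have hd : ∀ x : ℝ, HasDerivAt (fun x : ℝ => (Real.arctan x - x / (1 + x ^ 2)) / 2)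
      (x ^ 2 / (1 + x ^ 2) ^ 2) x := by
    intro x
    have h : 1 + x ^ 2 ≠ 0 := by positivity
    have := ((Real.hasDerivAt_arctan x).sub
      ((hasDerivAt_id x).div (((hasDerivAt_id x).pow 2).const_add 1) h)).div_const 2
    refine this.congr_deriv ?_
    simp
    field_simp
    ring
  have ht : Tendsto (fun x : ℝ => (Real.arctan x - x / (1 + x ^ 2)) / 2) atTop
      (nhds ((Real.pi / 2 - 0) / 2)) := by
    refine ((tendsto_nhds_of_tendsto_nhdsWithin Real.tendsto_arctan_atTop).sub ?_).div_const 2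
    have hinv : Tendsto (fun x : ℝ => x⁻¹) atTop (nhds 0) := tendsto_inv_atTop_zero
    refine squeeze_zero_norm' ?_ hinv
    filter_upwards [eventually_gt_atTop 0] with x hx
    rw [norm_div, Real.norm_of_nonneg hx.le, Real.norm_of_nonneg (by positivity),
      inv_eq_one_div, div_le_div_iff₀ (by positivity) hx]
    nlinarith
  have hi : Integrable (fun x : ℝ => x ^ 2 / (1 + x ^ 2) ^ 2) := by
    refine integrable_inv_one_add_sq.mono' (Continuous.aestronglyMeasurable ?_)
      (ae_of_all _ fun x => ?_)
    · exact Continuous.div (by fun_prop) (by fun_prop) fun x => by positivity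
    · rw [Real.norm_of_nonneg (by positivity)]
      exact sq_div_le x
  rw [integral_Ioi_of_hasDerivAt_of_tendsto (hd 0).continuousAt.continuousWithinAt
    (fun x _ => hd x) hi.integrableOn ht]
  simp
  ring

/-! ### Even and odd parts of a Schwartz function -/

lemma exists_bound (f : SchwartzMap ℝ ℂ) : ∃ C, 0 ≤ C ∧ ∀ x, ‖f x‖ ≤ C :=
  ⟨_, apply_nonneg _ f, f.norm_le_seminorm ℝ⟩

lemma exists_lipschitz (f : SchwartzMap ℝ ℂ) :
    ∃ C, 0 ≤ C ∧ ∀ x y, ‖f y - f x‖ ≤ C * |y - x| := by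
  obtain ⟨C, hC, h⟩ := exists_bound (SchwartzMap.derivCLM ℝ ℂ f)
  refine ⟨C, hC, fun x y => ?_⟩
  exact Convex.norm_image_sub_le_of_norm_deriv_le (s := univ)
    (fun z _ => (f.hasDerivAt z).differentiableAt)
    (fun z _ => by simpa [SchwartzMap.derivCLM_apply] using h z) convex_univ trivial trivial

/-- Second-order Taylor bound for the even part: its derivative `f'(x) - f'(-x)` is `O(x)`
because `f'` is Lipschitz. -/
lemma exists_even_bound (f : SchwartzMap ℝ ℂ) :
    ∃ C, 0 ≤ C ∧ ∀ x, 0 < x → ‖f x + f (-x) - 2 * f 0‖ ≤ C * x ^ 2 := by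
  obtain ⟨C, hC, h⟩ := exists_lipschitz (SchwartzMap.derivCLM ℝ ℂ f)
  simp only [SchwartzMap.derivCLM_apply] at h
  refine ⟨2 * C, by positivity, fun x hx => ?_⟩
  have hd : ∀ y : ℝ, HasDerivAt (fun y => f y + f (-y)) (deriv f y - deriv f (-y)) y := by
    intro y
    have h2 : HasDerivAt (fun y => f (-y)) ((-1 : ℝ) • deriv f (-y)) y :=
      (f.hasDerivAt (-y)).scomp y (hasDerivAt_neg y)
    refine ((f.hasDerivAt y).add h2).congr_deriv ?_
    simp [sub_eq_add_neg]
  have := Convex.norm_image_sub_le_of_norm_hasDerivWithin_le (s := Icc 0 x) (x := 0) (y := x)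
    (C := 2 * C * x) (fun y _ => (hd y).hasDerivWithinAt)
    (fun y hy => by
      refine (h (-y) y).trans ?_
      rw [show y - -y = 2 * y by ring, abs_of_nonneg (by linarith [hy.1])]
      nlinarith [hy.2]) (convex_Icc 0 x) ⟨le_rfl, hx.le⟩ ⟨hx.le, le_rfl⟩
  simp only [neg_zero, sub_zero, Real.norm_of_nonneg hx.le] at this
  rw [two_mul (f 0)]
  linarith

/-- The regularised even part `(f(x) + f(-x) - 2 f(0)) / x²`, whose integral over `(0, ∞)` is the
Hadamard finite part of `∫ f(x) / x²`. -/
noncomputable def regEven (f : SchwartzMap ℝ ℂ) (x : ℝ) : ℂ :=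
  (f x + f (-x) - 2 * f 0) / (x : ℂ) ^ 2

lemma continuousOn_regEven (f : SchwartzMap ℝ ℂ) : ContinuousOn (regEven f) (Ioi 0) := by
  have := f.continuous
  refine ContinuousOn.div (by fun_prop) (by fun_prop) fun x hx => ?_
  exact pow_ne_zero 2 (Complex.ofReal_ne_zero.2 (ne_of_gt hx))

lemma aestronglyMeasurable_regEven (f : SchwartzMap ℝ ℂ) :
    AEStronglyMeasurable (regEven f) (volume.restrict (Ioi 0)) :=
  (continuousOn_regEven f).aestronglyMeasurable measurableSet_Ioi

lemma integrableOn_regEven (f : SchwartzMap ℝ ℂ) : IntegrableOn (regEven f) (Ioi 0) := by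
  obtain ⟨A, hA, h1⟩ := exists_even_bound f
  obtain ⟨B, hB, h2⟩ := exists_bound f
  refine ((integrable_inv_one_add_sq.const_mul (A + 4 * B)).integrableOn).mono'
    (aestronglyMeasurable_regEven f) ?_
  filter_upwards [ae_restrict_mem measurableSet_Ioi] with x (hx : 0 < x)
  have h3 : ‖f x + f (-x) - 2 * f 0‖ ≤ 4 * B := by
    calc _ ≤ ‖f x‖ + ‖f (-x)‖ + ‖2 * f 0‖ := norm_sub_le_of_le (norm_add_le _ _) le_rfl
      _ ≤ B + B + 2 * B := by
        rw [norm_mul, Complex.norm_two]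
        gcongr <;> exact h2 _
      _ = 4 * B := by ring
  rw [regEven, norm_div, norm_pow, Complex.norm_real, Real.norm_of_nonneg hx.le,
    ← div_eq_mul_inv, div_le_div_iff₀ (by positivity) (by positivity)]
  nlinarith [h1 x hx, mul_le_mul_of_nonneg_right h3 (sq_nonneg x)]

/-! ### The finite part -/

lemma integrableOn_div_sq (g : ℝ → ℂ) (hg : Continuous g) {C : ℝ} (hC : ∀ x, ‖g x‖ ≤ C)
    {ε : ℝ} (hε : 0 < ε) : IntegrableOn (fun x : ℝ => g x / (x : ℂ) ^ 2) (Ioi ε) := by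
  refine ((integrableOn_Ioi_rpow_of_lt (a := -2) (by norm_num) hε).const_mul C).mono' ?_ ?_
  · refine ContinuousOn.aestronglyMeasurable
      (ContinuousOn.div (by fun_prop) (by fun_prop) fun x hx => ?_) measurableSet_Ioi
    exact pow_ne_zero 2 (Complex.ofReal_ne_zero.2 (ne_of_gt (hε.trans hx)))
  · filter_upwards [ae_restrict_mem measurableSet_Ioi] with x (hx : ε < x)
    have hx0 : 0 < x := hε.trans hx
    rw [norm_div, norm_pow, Complex.norm_real, Real.norm_of_nonneg hx0.le, div_eq_mul_inv,
      Real.rpow_neg hx0.le, Real.rpow_two]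
    gcongr
    exact hC x

lemma integral_const_div_sq (c : ℂ) {ε : ℝ} (hε : 0 < ε) :
    ∫ x in Ioi ε, c / (x : ℂ) ^ 2 = c / ε := by
  have h := integral_Ioi_rpow_of_lt (a := -2) (by norm_num) hε
  have h' : ∫ x in Ioi ε, c / (x : ℂ) ^ 2 = ∫ x in Ioi ε, c * (((x : ℝ) ^ (-2 : ℝ) : ℝ) : ℂ) := by
    refine setIntegral_congr_fun measurableSet_Ioi fun x (hx : ε < x) => ?_
    simp only [Real.rpow_neg (hε.trans hx).le, Real.rpow_two]
    push_cast
    rw [div_eq_mul_inv]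
  rw [h', integral_const_mul, integral_complex_ofReal, h, show (-2 : ℝ) + 1 = -1 by norm_num,
    Real.rpow_neg_one]
  push_cast
  rw [div_neg, div_one, neg_neg, div_eq_mul_inv]

/-- The truncated and renormalised integral is the integral of the regularised even part over
`(ε, ∞)`, since `∫_ε^∞ 2 f(0) / x² = 2 f(0) / ε`. -/
lemma truncated_eq (f : SchwartzMap ℝ ℂ) {ε : ℝ} (hε : 0 < ε) :
    (∫ x in Iio (-ε), f x / (x : ℂ) ^ 2) + (∫ x in Ioi ε, f x / (x : ℂ) ^ 2)
      - 2 * f 0 / (ε : ℂ) = ∫ x in Ioi ε, regEven f x := by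
  obtain ⟨B, hB, h2⟩ := exists_bound f
  have hf := f.continuous
  have h3 : IntegrableOn (fun x : ℝ => f (-x) / (((-x : ℝ) : ℂ)) ^ 2) (Ioi ε) := by
    simpa using integrableOn_div_sq (fun x => f (-x)) (by fun_prop) (fun x => h2 (-x)) hε
  have h4 := integrableOn_div_sq f hf h2 hε
  have h5 := integrableOn_div_sq (fun _ => 2 * f 0) (by fun_prop) (fun _ => le_rfl) hε
  have h6 : IntegrableOn (fun x : ℝ => f (-x) / (((-x : ℝ) : ℂ)) ^ 2 + f x / (x : ℂ) ^ 2)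
    (Ioi ε) := h3.add h4
  rw [← integral_Iic_eq_integral_Iio, ← integral_comp_neg_Ioi ε (fun x : ℝ => f x / (x : ℂ) ^ 2),
    ← integral_const_div_sq _ hε, ← integral_add h3 h4, ← integral_sub h6 h5]
  refine setIntegral_congr_fun measurableSet_Ioi fun x _ => ?_
  simp only [regEven]
  push_cast
  ring

lemma tendsto_truncated (f : SchwartzMap ℝ ℂ) :
    Tendsto (fun ε : ℝ => ∫ x in Ioi ε, regEven f x) (nhdsWithin 0 (Ioi 0))
      (nhds (∫ x in Ioi 0, regEven f x)) := by
  have hi := integrableOn_regEven f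
  have key : Tendsto (fun ε : ℝ => ∫ x in Ioi 0, (Ioi ε).indicator (regEven f) x)
      (nhdsWithin 0 (Ioi 0)) (nhds (∫ x in Ioi 0, regEven f x)) := by
    refine tendsto_integral_filter_of_dominated_convergence (fun x => ‖regEven f x‖) ?_ ?_
      hi.norm ?_
    · exact Eventually.of_forall fun ε => hi.aestronglyMeasurable.indicator measurableSet_Ioi
    · exact Eventually.of_forall fun ε => ae_of_all _ fun x => norm_indicator_le_norm_self _ _
    · filter_upwards [ae_restrict_mem measurableSet_Ioi] with x (hx : 0 < x)
      refine tendsto_const_nhds.congr' ?_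
      filter_upwards [nhdsWithin_le_nhds (Iio_mem_nhds hx)] with ε hε
      rw [indicator_of_mem (show x ∈ Ioi ε from hε)]
  refine key.congr' ?_
  filter_upwards [self_mem_nhdsWithin] with ε (hε : 0 < ε)
  rw [setIntegral_indicator measurableSet_Ioi, inter_eq_right.2 (Ioi_subset_Ioi hε.le)]

/-! ### The even and odd contributions to the regularised integral -/

lemma norm_even_le (f : SchwartzMap ℝ ℂ) (ε : ℝ) {x : ℝ} (hx : 0 < x) :
    ‖(f x + f (-x) - 2 * f 0) * (evenKernel ε x : ℂ)‖ ≤ ‖regEven f x‖ := by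
  rw [regEven, norm_mul, norm_div, norm_pow, Complex.norm_real, Complex.norm_real,
    Real.norm_of_nonneg hx.le, Real.norm_eq_abs, div_eq_mul_inv]
  gcongr
  refine (abs_evenKernel_le ε x).trans ?_
  gcongr
  nlinarith [sq_nonneg ε]

lemma integrableOn_even (f : SchwartzMap ℝ ℂ) {ε : ℝ} (hε : 0 < ε) :
    IntegrableOn (fun x => (f x + f (-x) - 2 * f 0) * (evenKernel ε x : ℂ)) (Ioi 0) := by
  have hf := f.continuous
  have hk := continuous_evenKernel hε
  refine (integrableOn_regEven f).norm.mono'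
    (Continuous.aestronglyMeasurable (by fun_prop)) ?_
  filter_upwards [ae_restrict_mem measurableSet_Ioi] with x hx using norm_even_le f ε hx

lemma tendsto_even (f : SchwartzMap ℝ ℂ) :
    Tendsto (fun ε : ℝ => ∫ x in Ioi 0, (f x + f (-x) - 2 * f 0) * (evenKernel ε x : ℂ))
      (nhdsWithin 0 (Ioi 0)) (nhds (∫ x in Ioi 0, regEven f x)) := by
  refine tendsto_integral_filter_of_dominated_convergence (fun x => ‖regEven f x‖) ?_ ?_
      (integrableOn_regEven f).norm ?_
  · filter_upwards [self_mem_nhdsWithin] with ε hε using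
      (integrableOn_even f hε).aestronglyMeasurable
  · refine Eventually.of_forall fun ε => ?_
    filter_upwards [ae_restrict_mem measurableSet_Ioi] with x hx using norm_even_le f ε hx
  · filter_upwards [ae_restrict_mem measurableSet_Ioi] with x (hx : 0 < x)
    have hc : ContinuousAt (fun ε : ℝ => evenKernel ε x) 0 := by
      unfold evenKernel
      refine ContinuousAt.div (by fun_prop) (by fun_prop) ?_
      positivity
    have := ((Complex.continuous_ofReal.continuousAt.tendsto.comp hc.tendsto).const_mul
      (f x + f (-x) - 2 * f 0)).mono_left (nhdsWithin_le_nhds (s := Ioi 0))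
    refine Tendsto.congr' EventuallyEq.rfl (this.trans_eq ?_)
    congr 1
    have hx' : (x : ℂ) ≠ 0 := by exact_mod_cast hx.ne'
    simp [regEven, evenKernel]
    field_simp

/-- The odd contribution: `(f(x) - f(-x)) · i Im (x + iε)⁻²`. -/
noncomputable def oddTerm (f : SchwartzMap ℝ ℂ) (ε x : ℝ) : ℂ :=
  (f x - f (-x)) * (-2 * Complex.I * ε * x / ((x : ℂ) ^ 2 + (ε : ℂ) ^ 2) ^ 2)

/-- Substituting `x = ε t` turns the odd contribution into an integral against the fixed kernel
`t / (1 + t²)²` of the difference quotient `(f(εt) - f(-εt)) / ε`. -/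
lemma integral_oddTerm (f : SchwartzMap ℝ ℂ) {ε : ℝ} (hε : 0 < ε) :
    ∫ x in Ioi 0, oddTerm f ε x = ∫ t in Ioi (0 : ℝ),
      (-2 * Complex.I) * ((f (ε * t) - f (-(ε * t))) / ε *
        ((t / (1 + t ^ 2) ^ 2 : ℝ) : ℂ)) := by
  have h := integral_comp_mul_left_Ioi (oddTerm f ε) 0 hε
  rw [mul_zero, eq_inv_smul_iff₀ hε.ne', ← integral_smul] at h
  rw [← h]
  congr 1
  ext t
  have hε' : (ε : ℂ) ≠ 0 := by exact_mod_cast hε.ne'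
  have ht : (1 + (t : ℂ) ^ 2) ≠ 0 := by
    have : (1 + t ^ 2 : ℝ) ≠ 0 := by positivity
    exact_mod_cast this
  have h2 : ((ε : ℂ) * t) ^ 2 + (ε : ℂ) ^ 2 = (ε : ℂ) ^ 2 * (1 + (t : ℂ) ^ 2) := by ring
  simp only [oddTerm, Complex.real_smul]
  push_cast
  rw [h2]
  field_simp

lemma tendsto_odd (f : SchwartzMap ℝ ℂ) :
    Tendsto (fun ε : ℝ => ∫ x in Ioi 0, oddTerm f ε x) (nhdsWithin 0 (Ioi 0))
      (nhds (-(Complex.I * (Real.pi : ℂ) * deriv f 0))) := by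
  obtain ⟨C, hC, hL⟩ := exists_lipschitz f
  have hf := f.continuous
  have hker : Continuous fun t : ℝ => t / (1 + t ^ 2) ^ 2 :=
    Continuous.div (by fun_prop) (by fun_prop) fun t => by positivity
  have key : Tendsto (fun ε : ℝ => ∫ t in Ioi (0 : ℝ),
      (-2 * Complex.I) * ((f (ε * t) - f (-(ε * t))) / ε * ((t / (1 + t ^ 2) ^ 2 : ℝ) : ℂ)))
      (nhdsWithin 0 (Ioi 0))
      (nhds (∫ t in Ioi (0 : ℝ), (-2 * Complex.I) *
        ((2 * t * deriv f 0) * ((t / (1 + t ^ 2) ^ 2 : ℝ) : ℂ)))) := by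
    refine tendsto_integral_filter_of_dominated_convergence
      (fun t => 4 * C * (1 + t ^ 2)⁻¹) ?_ ?_
      (integrable_inv_one_add_sq.const_mul _).integrableOn ?_
    · exact Eventually.of_forall fun ε => Continuous.aestronglyMeasurable (by fun_prop)
    · filter_upwards [self_mem_nhdsWithin] with ε (hε : 0 < ε)
      filter_upwards [ae_restrict_mem measurableSet_Ioi] with t (ht : 0 < t)
      have h1 : ‖(f (ε * t) - f (-(ε * t))) / (ε : ℂ)‖ ≤ 2 * C * t := by
        rw [norm_div, Complex.norm_real, Real.norm_of_nonneg hε.le, div_le_iff₀ hε]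
        refine (hL _ _).trans_eq ?_
        rw [show ε * t - -(ε * t) = 2 * (ε * t) by ring, abs_of_pos (by positivity)]
        ring
      rw [norm_mul (-2 * Complex.I), norm_mul (_ / _), Complex.norm_real,
        Real.norm_of_nonneg (by positivity)]
      calc ‖-2 * Complex.I‖ * (‖(f (ε * t) - f (-(ε * t))) / (ε : ℂ)‖ * (t / (1 + t ^ 2) ^ 2))
          ≤ 2 * (2 * C * t * (t / (1 + t ^ 2) ^ 2)) := by
            gcongr
            simp
        _ = 4 * C * (t ^ 2 / (1 + t ^ 2) ^ 2) := by ring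
        _ ≤ _ := by
            gcongr
            exact sq_div_le t
    · refine ae_of_all _ fun t => ?_
      refine Tendsto.const_mul _ (Tendsto.mul_const _ ?_)
      have hd : HasDerivAt (fun ε : ℝ => f (ε * t) - f (-(ε * t))) (2 * t * deriv f 0) 0 := by
        have h0 := f.hasDerivAt 0
        have ha : HasDerivAt (fun ε : ℝ => ε * t) t 0 := by
          simpa using (hasDerivAt_id (0 : ℝ)).mul_const t
        have h1 : HasDerivAt (fun ε : ℝ => f (ε * t)) (t • deriv f 0) 0 :=
          HasDerivAt.scomp (0 : ℝ) (by simpa using h0) ha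
        have h2 : HasDerivAt (fun ε : ℝ => f (-(ε * t))) ((-t) • deriv f 0) 0 :=
          HasDerivAt.scomp (0 : ℝ) (by simpa using h0) ha.neg
        refine (h1.sub h2).congr_deriv ?_
        simp only [Complex.real_smul]
        push_cast
        ring
      have := hd.tendsto_slope.mono_left
        (nhdsWithin_mono 0 (fun ε (hε : ε ∈ Ioi (0 : ℝ)) => ne_of_gt hε))
      refine this.congr fun ε => ?_
      simp [slope_def_module, div_eq_inv_mul]
  have hval : ∫ t in Ioi (0 : ℝ), (-2 * Complex.I) *
        ((2 * t * deriv f 0) * ((t / (1 + t ^ 2) ^ 2 : ℝ) : ℂ))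
      = -(Complex.I * (Real.pi : ℂ) * deriv f 0) := by
    have : ∀ t : ℝ, (-2 * Complex.I) *
        ((2 * t * deriv f 0) * ((t / (1 + t ^ 2) ^ 2 : ℝ) : ℂ))
        = (-4 * Complex.I * deriv f 0) * ((t ^ 2 / (1 + t ^ 2) ^ 2 : ℝ) : ℂ) := by
      intro t
      push_cast
      ring
    simp_rw [this]
    rw [integral_const_mul, integral_complex_ofReal, integral_sq_div]
    push_cast
    ring
  rw [hval] at key
  refine key.congr' ?_
  filter_upwards [self_mem_nhdsWithin] with ε hε using (integral_oddTerm f hε).symm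

/-! ### Folding the integral onto the half-line -/

lemma add_I_mul_ne_zero {ε : ℝ} (hε : 0 < ε) (x : ℝ) : (x : ℂ) + Complex.I * ε ≠ 0 := by
  intro h
  have := congrArg Complex.im h
  simp at this
  exact hε.ne' this

lemma integrable_div (f : SchwartzMap ℝ ℂ) {ε : ℝ} (hε : 0 < ε) :
    Integrable (fun x : ℝ => f x / ((x : ℂ) + Complex.I * ε) ^ 2) := by
  obtain ⟨B, hB, h2⟩ := exists_bound f
  have hf := f.continuous
  refine ((integrable_inv_sq_add_sq hε).const_mul B).mono'
    (Continuous.aestronglyMeasurable ?_) (ae_of_all _ fun x => ?_)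
  · exact Continuous.div (by fun_prop) (by fun_prop) fun x =>
      pow_ne_zero 2 (add_I_mul_ne_zero hε x)
  · have : ‖(x : ℂ) + Complex.I * ε‖ ^ 2 = x ^ 2 + ε ^ 2 := by
      rw [← Complex.normSq_eq_norm_sq, Complex.normSq_apply]
      simp
      ring
    rw [norm_div, norm_pow, this, div_eq_mul_inv]
    gcongr
    exact h2 x

lemma fold_identity (f : SchwartzMap ℝ ℂ) {ε : ℝ} (hε : 0 < ε) (x : ℝ) :
    f (-x) / (((-x : ℝ) : ℂ) + Complex.I * ε) ^ 2 + f x / ((x : ℂ) + Complex.I * ε) ^ 2 =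
      (f x + f (-x) - 2 * f 0) * (evenKernel ε x : ℂ) + 2 * f 0 * (evenKernel ε x : ℂ)
        + oddTerm f ε x := by
  have h1 := add_I_mul_ne_zero hε x
  have h2 := add_I_mul_ne_zero hε (-x)
  have h3 : (x : ℂ) ^ 2 + (ε : ℂ) ^ 2 ≠ 0 := by
    have : (x ^ 2 + ε ^ 2 : ℝ) ≠ 0 := by positivity
    exact_mod_cast this
  have hI := Complex.I_sq
  have e1 : 1 / ((x : ℂ) + Complex.I * ε) ^ 2
      = ((x : ℂ) - Complex.I * ε) ^ 2 / ((x : ℂ) ^ 2 + (ε : ℂ) ^ 2) ^ 2 := by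
    rw [div_eq_div_iff (pow_ne_zero 2 h1) (pow_ne_zero 2 h3), ← mul_pow, one_mul]
    congr 1
    linear_combination (ε : ℂ) ^ 2 * hI
  have e2 : 1 / (((-x : ℝ) : ℂ) + Complex.I * ε) ^ 2
      = ((x : ℂ) + Complex.I * ε) ^ 2 / ((x : ℂ) ^ 2 + (ε : ℂ) ^ 2) ^ 2 := by
    rw [div_eq_div_iff (pow_ne_zero 2 h2) (pow_ne_zero 2 h3), ← mul_pow, one_mul, ← neg_sq (_ * _)]
    congr 1
    push_cast
    linear_combination (ε : ℂ) ^ 2 * hI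
  rw [div_eq_mul_one_div (f (-x)), div_eq_mul_one_div (f x), e1, e2]
  simp only [evenKernel, oddTerm]
  push_cast
  field_simp
  linear_combination (f x + f (-x)) * (ε : ℂ) ^ 2 * hI

lemma integral_eq (f : SchwartzMap ℝ ℂ) {ε : ℝ} (hε : 0 < ε) :
    ∫ x : ℝ, f x / ((x : ℂ) + Complex.I * ε) ^ 2 =
      (∫ x in Ioi 0, (f x + f (-x) - 2 * f 0) * (evenKernel ε x : ℂ))
        + ∫ x in Ioi 0, oddTerm f ε x := by
  have hF := integrable_div f hε
  have hK : IntegrableOn (fun x => 2 * f 0 * (evenKernel ε x : ℂ)) (Ioi 0) :=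
    ((integrable_evenKernel hε).ofReal.const_mul _).integrableOn
  have hE := integrableOn_even f hε
  have hsum : IntegrableOn (fun x : ℝ => f (-x) / (((-x : ℝ) : ℂ) + Complex.I * ε) ^ 2
      + f x / ((x : ℂ) + Complex.I * ε) ^ 2) (Ioi 0) := (hF.comp_neg.add hF).integrableOn
  have hO : IntegrableOn (oddTerm f ε) (Ioi 0) := by
    refine ((hsum.sub hE).sub hK).congr (ae_of_all _ fun x => ?_)
    simp only [Pi.sub_apply, fold_identity f hε x]
    ring
  have hfold : ∫ x : ℝ, f x / ((x : ℂ) + Complex.I * ε) ^ 2 = ∫ x in Ioi (0 : ℝ),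
      (f (-x) / (((-x : ℝ) : ℂ) + Complex.I * ε) ^ 2 + f x / ((x : ℂ) + Complex.I * ε) ^ 2) := by
    rw [integral_add hF.comp_neg.integrableOn hF.integrableOn,
      integral_comp_neg_Ioi 0 (fun x : ℝ => f x / ((x : ℂ) + Complex.I * ε) ^ 2), neg_zero,
      intervalIntegral.integral_Iic_add_Ioi hF.integrableOn hF.integrableOn]
  rw [hfold]
  simp_rw [fold_identity f hε]
  have hEK : IntegrableOn (fun x => (f x + f (-x) - 2 * f 0) * (evenKernel ε x : ℂ)
      + 2 * f 0 * (evenKernel ε x : ℂ)) (Ioi 0) := hE.add hK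
  rw [integral_add hEK hO, integral_add hE hK, integral_const_mul,
    integral_complex_ofReal, integral_evenKernel hε]
  simp

end SokhotskiPlemelj

/-- Second-order Sokhotski–Plemelj-type formula: for a Schwartz function `f`, the Hadamard
finite part `f.p.∫ f(x)/x² dx` exists (as a limit `FP`), and
`lim_{ε→0⁺} ∫ f(x)/(x + iε)² dx = FP − iπ f′(0)`. -/
theorem sokhotski_plemelj_second_order (f : SchwartzMap ℝ ℂ) :
    ∃ FP : ℂ,
      Tendsto
        (fun ε : ℝ =>
          (∫ x in Set.Iio (-ε), f x / (x : ℂ) ^ 2) +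
          (∫ x in Set.Ioi ε, f x / (x : ℂ) ^ 2) - 2 * f 0 / (ε : ℂ))
        (nhdsWithin 0 (Set.Ioi 0)) (nhds FP) ∧
      Tendsto
        (fun ε : ℝ => ∫ x : ℝ, f x / ((x : ℂ) + Complex.I * ε) ^ 2)
        (nhdsWithin 0 (Set.Ioi 0))
        (nhds (FP - Complex.I * (Real.pi : ℂ) * deriv (fun y : ℝ => f y) 0)) := by
  refine ⟨∫ x in Set.Ioi 0, SokhotskiPlemelj.regEven f x, ?_, ?_⟩
  · refine (SokhotskiPlemelj.tendsto_truncated f).congr' ?_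
    filter_upwards [self_mem_nhdsWithin] with ε hε using
      (SokhotskiPlemelj.truncated_eq f hε).symm
  · rw [sub_eq_add_neg]
    refine ((SokhotskiPlemelj.tendsto_even f).add (SokhotskiPlemelj.tendsto_odd f)).congr' ?_
    filter_upwards [self_mem_nhdsWithin] with ε hε using (SokhotskiPlemelj.integral_eq f hε).symm
end

section
/- For every Schwartz function f : ℝ → ℂ and every x₀ ∈ ℝ, the limit as ε → 0⁺ of ∫_ℝ f(x) · (x − x₀)/((x − x₀)² + ε²) dx exists and equals the principal value p.v.∫_ℝ f(x)/(x − x₀) dx. -/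
/-!
Write `g t = (f (x₀ + t) - f (x₀ - t)) / t` for `t > 0`. Folding the real line at `x₀` turns the
truncated integral into `∫_δ^∞ g t dt` (`truncated_eq`) and the Lorentzian integral into
`∫_0^∞ g t * t² / (t² + ε²) dt` (`lorentzian_eq`). The odd difference quotient `g` is integrable on
`(0, ∞)` (`integrableOn_oddQuotient`): near `0` it is bounded because `f` is Lipschitz, and for
`t ≥ 1` it is dominated by `‖f (x₀ + t)‖ + ‖f (x₀ - t)‖`. Both weights are bounded by `1` and
converge pointwise to `1`, so dominated convergence sends both integrals to `∫_0^∞ g`.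
-/

open MeasureTheory Filter Set Topology

/-- The odd difference quotient `(f (x₀ + t) - f (x₀ - t)) / t` of `f` at `x₀`; its integral over
`(0, ∞)` is the principal value of `f x / (x - x₀)`. -/
noncomputable def oddQuotient (f : SchwartzMap ℝ ℂ) (x₀ t : ℝ) : ℂ :=
  (f (x₀ + t) - f (x₀ - t)) / (t : ℂ)

lemma setIntegral_Ioi_shift (F : ℝ → ℂ) (a δ : ℝ) :
    ∫ x in Ioi (a + δ), F x = ∫ t in Ioi δ, F (a + t) := by
  rw [← (measurePreserving_add_left volume a).setIntegral_preimage_emb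
    (measurableEmbedding_addLeft a)]
  congr 2
  ext t
  simp

lemma setIntegral_Iio_reflect (F : ℝ → ℂ) (a δ : ℝ) :
    ∫ x in Iio (a - δ), F x = ∫ t in Ioi δ, F (a - t) := by
  rw [← (Measure.measurePreserving_sub_left volume a).setIntegral_preimage_emb
    (MeasurableEquiv.subLeft a).measurableEmbedding]
  congr 2
  ext t
  simp

lemma exists_lipschitz_bound (f : SchwartzMap ℝ ℂ) :
    ∃ K : ℝ, 0 < K ∧ ∀ x y : ℝ, ‖f y - f x‖ ≤ K * ‖y - x‖ := by
  obtain ⟨K, hK, h⟩ := f.decay 0 1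
  refine ⟨K, hK, fun x y => ?_⟩
  refine convex_univ.norm_image_sub_le_of_norm_fderiv_le (𝕜 := ℝ)
    (fun z _ => f.differentiable z) (fun z _ => ?_) (mem_univ x) (mem_univ y)
  have := h z
  rwa [pow_zero, one_mul, norm_iteratedFDeriv_one] at this

lemma measurable_oddQuotient (f : SchwartzMap ℝ ℂ) (x₀ : ℝ) : Measurable (oddQuotient f x₀) := by
  have hf := f.continuous.measurable
  unfold oddQuotient
  fun_prop

lemma integrableOn_oddQuotient (f : SchwartzMap ℝ ℂ) (x₀ : ℝ) :
    IntegrableOn (oddQuotient f x₀) (Ioi 0) := by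
  obtain ⟨K, hK, hL⟩ := exists_lipschitz_bound f
  have h1 : Integrable (fun t => (Ioc (0 : ℝ) 1).indicator (fun _ => 2 * K) t) :=
    (integrable_indicator_iff measurableSet_Ioc).2 (integrableOn_const (by simp))
  have h2 : Integrable (fun t => ‖f (x₀ + t)‖) := (f.integrable.comp_add_left x₀).norm
  have h3 : Integrable (fun t => ‖f (x₀ - t)‖) := (f.integrable.comp_sub_left x₀).norm
  refine Integrable.mono' ((h1.add h2).add h3).integrableOn
    (measurable_oddQuotient f x₀).aestronglyMeasurable ?_
  filter_upwards [ae_restrict_mem measurableSet_Ioi] with t (ht : 0 < t)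
  simp only [Pi.add_apply, oddQuotient, norm_div, Complex.norm_real, Real.norm_of_nonneg ht.le]
  have n2 := norm_nonneg (f (x₀ + t))
  have n3 := norm_nonneg (f (x₀ - t))
  rw [div_le_iff₀ ht]
  by_cases h : t ≤ 1
  · rw [indicator_of_mem (show t ∈ Ioc (0 : ℝ) 1 from ⟨ht, h⟩)]
    have := hL (x₀ - t) (x₀ + t)
    rw [show x₀ + t - (x₀ - t) = 2 * t by ring, Real.norm_of_nonneg (by positivity)] at this
    nlinarith [mul_nonneg n2 ht.le, mul_nonneg n3 ht.le]
  · rw [indicator_of_notMem (fun hm => h hm.2)]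
    have := norm_sub_le (f (x₀ + t)) (f (x₀ - t))
    push Not at h
    nlinarith

lemma truncated_eq (f : SchwartzMap ℝ ℂ) (x₀ : ℝ) {δ : ℝ} (hδ : 0 < δ) :
    (∫ x in Ioi (x₀ + δ), f x / ((x : ℂ) - (x₀ : ℂ))) +
      ∫ x in Iio (x₀ - δ), f x / ((x : ℂ) - (x₀ : ℂ)) =
    ∫ t in Ioi δ, oddQuotient f x₀ t := by
  have key : ∀ φ : ℝ → ℂ, Integrable φ → IntegrableOn (fun t => φ t / (t : ℂ)) (Ioi δ) := by
    intro φ hφ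
    refine Integrable.mono' (hφ.norm.const_mul δ⁻¹).integrableOn ?_ ?_
    · exact (hφ.aestronglyMeasurable.restrict.aemeasurable.div
        Complex.measurable_ofReal.aemeasurable).aestronglyMeasurable
    · filter_upwards [ae_restrict_mem measurableSet_Ioi] with t (ht : δ < t)
      rw [norm_div, Complex.norm_real, Real.norm_of_nonneg (hδ.trans ht).le, div_eq_inv_mul]
      gcongr
  rw [setIntegral_Ioi_shift, setIntegral_Iio_reflect]
  have e1 : ∀ t : ℝ, f (x₀ + t) / (((x₀ + t : ℝ) : ℂ) - x₀) = f (x₀ + t) / (t : ℂ) := by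
    intro t; push_cast; congr 1; ring
  have e2 : ∀ t : ℝ, f (x₀ - t) / (((x₀ - t : ℝ) : ℂ) - x₀) = -(f (x₀ - t) / (t : ℂ)) := by
    intro t; rw [← div_neg]; push_cast; congr 1; ring
  simp_rw [e1, e2]
  rw [integral_neg, ← sub_eq_add_neg,
    ← integral_sub (key _ (f.integrable.comp_add_left x₀)) (key _ (f.integrable.comp_sub_left x₀))]
  simp_rw [oddQuotient, sub_div]

lemma lorentzian_eq (f : SchwartzMap ℝ ℂ) (x₀ : ℝ) {ε : ℝ} (hε : 0 < ε) :
    ∫ x : ℝ, f x * (((x - x₀) / ((x - x₀) ^ 2 + ε ^ 2) : ℝ) : ℂ) =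
    ∫ t in Ioi (0 : ℝ), oddQuotient f x₀ t * ((t ^ 2 / (t ^ 2 + ε ^ 2) : ℝ) : ℂ) := by
  set F : ℝ → ℂ := fun x => f x * (((x - x₀) / ((x - x₀) ^ 2 + ε ^ 2) : ℝ) : ℂ) with hF
  have hFi : Integrable F := by
    refine f.integrable.mul_bdd (c := ε⁻¹) ?_ (ae_of_all _ fun x => ?_)
    · exact (by fun_prop : Measurable fun x : ℝ =>
        (((x - x₀) / ((x - x₀) ^ 2 + ε ^ 2) : ℝ) : ℂ)).aestronglyMeasurable
    · -- by the arithmetic-geometric mean inequality, `|u| * ε ≤ u ^ 2 + ε ^ 2`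
      have hp : 0 < (x - x₀) ^ 2 + ε ^ 2 := by positivity
      rw [Complex.norm_real, norm_div, Real.norm_of_nonneg hp.le, div_le_iff₀ hp,
        inv_mul_eq_div, le_div_iff₀ hε, Real.norm_eq_abs]
      nlinarith [sq_abs (x - x₀), sq_nonneg (|x - x₀| - ε), abs_nonneg (x - x₀)]
  have hsplit : ∫ x, F x = (∫ x in Ioi (x₀ + 0), F x) + ∫ x in Iio (x₀ - 0), F x := by
    rw [add_zero, sub_zero, ← integral_Iic_eq_integral_Iio, add_comm,
      intervalIntegral.integral_Iic_add_Ioi hFi.integrableOn hFi.integrableOn]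
  rw [hsplit, setIntegral_Ioi_shift, setIntegral_Iio_reflect,
    ← integral_add (hFi.comp_add_left x₀).integrableOn (hFi.comp_sub_left x₀).integrableOn]
  refine setIntegral_congr_fun measurableSet_Ioi fun t (ht : 0 < t) => ?_
  have hp : ((t : ℂ) ^ 2 + (ε : ℂ) ^ 2) ≠ 0 := by
    exact_mod_cast (by positivity : t ^ 2 + ε ^ 2 ≠ 0)
  have ht' : (t : ℂ) ≠ 0 := by exact_mod_cast ht.ne'
  simp only [hF, oddQuotient, add_sub_cancel_left, sub_sub_cancel_left, neg_sq]
  push_cast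
  field_simp
  ring

theorem lorentzian_regularization_tendsto_principal_value
    (f : SchwartzMap ℝ ℂ) (x₀ : ℝ) :
    ∃ PV : ℂ,
      Tendsto
        (fun δ : ℝ =>
          (∫ x in Set.Ioi (x₀ + δ), f x / ((x : ℂ) - (x₀ : ℂ))) +
          ∫ x in Set.Iio (x₀ - δ), f x / ((x : ℂ) - (x₀ : ℂ)))
        (nhdsWithin 0 (Set.Ioi 0)) (nhds PV) ∧
      Tendsto
        (fun ε : ℝ =>
          ∫ x : ℝ, f x * (((x - x₀) / ((x - x₀) ^ 2 + ε ^ 2) : ℝ) : ℂ))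
        (nhdsWithin 0 (Set.Ioi 0)) (nhds PV) := by
  have hg := integrableOn_oddQuotient f x₀
  have hm := measurable_oddQuotient f x₀
  refine ⟨∫ t in Ioi (0 : ℝ), oddQuotient f x₀ t, ?_, ?_⟩
  · have hlim : Tendsto
        (fun δ : ℝ => ∫ t in Ioi (0 : ℝ), (Ioi δ).indicator (oddQuotient f x₀) t)
        (𝓝[>] 0) (𝓝 (∫ t in Ioi (0 : ℝ), oddQuotient f x₀ t)) := by
      refine tendsto_integral_filter_of_dominated_convergence (fun t => ‖oddQuotient f x₀ t‖)
        (Eventually.of_forall fun δ =>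
          (hm.indicator measurableSet_Ioi).aestronglyMeasurable)
        (Eventually.of_forall fun δ => ae_of_all _ fun t => norm_indicator_le_norm_self _ _)
        hg.norm ?_
      filter_upwards [ae_restrict_mem measurableSet_Ioi] with t (ht : 0 < t)
      refine tendsto_const_nhds.congr' ?_
      filter_upwards [nhdsWithin_le_nhds (Iio_mem_nhds ht)] with δ hδ
      exact (indicator_of_mem (show t ∈ Ioi δ from hδ) _).symm
    refine hlim.congr' ?_
    filter_upwards [self_mem_nhdsWithin] with δ (hδ : 0 < δ)
    rw [truncated_eq f x₀ hδ, setIntegral_indicator measurableSet_Ioi,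
      inter_eq_self_of_subset_right (Ioi_subset_Ioi hδ.le)]
  · have hlim : Tendsto
        (fun ε : ℝ => ∫ t in Ioi (0 : ℝ),
          oddQuotient f x₀ t * ((t ^ 2 / (t ^ 2 + ε ^ 2) : ℝ) : ℂ))
        (𝓝[>] 0) (𝓝 (∫ t in Ioi (0 : ℝ), oddQuotient f x₀ t)) := by
      refine tendsto_integral_filter_of_dominated_convergence (fun t => ‖oddQuotient f x₀ t‖)
        (Eventually.of_forall fun ε =>
          (by fun_prop : Measurable fun t : ℝ => oddQuotient f x₀ t *
            ((t ^ 2 / (t ^ 2 + ε ^ 2) : ℝ) : ℂ)).aestronglyMeasurable)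
        (Eventually.of_forall fun ε => ae_of_all _ fun t => ?_) hg.norm ?_
      · rw [norm_mul, Complex.norm_real, Real.norm_of_nonneg (by positivity)]
        refine mul_le_of_le_one_right (norm_nonneg _) (div_le_one_of_le₀ ?_ (by positivity))
        nlinarith [sq_nonneg ε]
      · filter_upwards [ae_restrict_mem measurableSet_Ioi] with t (ht : 0 < t)
        -- for fixed `t > 0` the weight is continuous in `ε`, with value `1` at `ε = 0`
        have hc : Continuous fun ε : ℝ =>
            oddQuotient f x₀ t * ((t ^ 2 / (t ^ 2 + ε ^ 2) : ℝ) : ℂ) := by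
          refine continuous_const.mul (Complex.continuous_ofReal.comp ?_)
          exact continuous_const.div (by fun_prop) fun ε => by positivity
        have h0 := (hc.tendsto 0).mono_left (nhdsWithin_le_nhds (s := Ioi 0))
        have hw : t ^ 2 / (t ^ 2 + (0 : ℝ) ^ 2) = 1 := by
          field_simp
          ring
        simpa only [hw, Complex.ofReal_one, mul_one] using h0
    refine hlim.congr' ?_
    filter_upwards [self_mem_nhdsWithin] with ε (hε : 0 < ε)
    exact (lorentzian_eq f x₀ hε).symm
end

section
/- For every integer n ≥ 1 and every Schwartz function f : ℝ → ℂ, the limit as ε → 0⁺ of ∫_ℝ f(x) · (x − iε)^{−n} dx exists in ℂ. (This gives meaning to the regularized negative powers (dθ ± iε)^{−p−1} spanning the Large Hilbert Space in the paper.) -/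
open MeasureTheory Filter

/-!
Multiplying by `i` turns `x - iε` into `w = ε + ix`, which lies in the right half-plane, where the
principal logarithm is holomorphic. Starting from `G(w) = w log w - w`, successive `x`-derivatives
of `G(ε + ix)` are, up to nonzero constants, `log w, w⁻¹, w⁻², …`. Integrating by parts against a
Schwartz function moves these derivatives onto the Schwartz function
(`HasSchwartzLimit.of_hasDerivAt`), so existence of the limit need only be shown for `G` itself.
There it follows from dominated convergence: `G` extends continuously to the punctured imaginary
axis, and `‖G(ε + ix)‖ ≤ 12 (1 + x²)` uniformly in `0 < ε ≤ 1` because `r |log r| ≤ 1 + r²`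
(`hasSchwartzLimit_mul_log_sub`).
-/

/-- The family `h ε` of functions on `ℝ` converges as `ε → 0⁺` when tested against any Schwartz
function; no regularity of the limit functional is asserted. -/
def HasSchwartzLimit (h : ℝ → ℝ → ℂ) : Prop :=
  ∀ f : SchwartzMap ℝ ℂ, ∃ L : ℂ,
    Tendsto (fun ε : ℝ => ∫ x : ℝ, f x * h ε x) (nhdsWithin 0 (Set.Ioi 0)) (nhds L)

/-- Continuity together with at most quadratic growth. -/
def QuadraticGrowth (g : ℝ → ℂ) : Prop :=
  Continuous g ∧ ∃ C : ℝ, ∀ x, ‖g x‖ ≤ C * (1 + x ^ 2)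

lemma SchwartzMap.integrable_norm_mul_one_add_sq (f : SchwartzMap ℝ ℂ) (C : ℝ) :
    Integrable fun x : ℝ => ‖f x‖ * (C * (1 + x ^ 2)) := by
  have h0 := f.integrable_pow_mul volume 0
  have h2 := f.integrable_pow_mul volume 2
  refine ((h0.add h2).const_mul C).congr (Eventually.of_forall fun x => ?_)
  simp only [Pi.add_apply, Real.norm_eq_abs, sq_abs]
  ring

lemma QuadraticGrowth.integrable_mul {g : ℝ → ℂ} (hg : QuadraticGrowth g)
    (f : SchwartzMap ℝ ℂ) : Integrable fun x : ℝ => f x * g x := by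
  obtain ⟨hc, C, hC⟩ := hg
  refine (f.integrable_norm_mul_one_add_sq C).mono'
    (f.continuous.mul hc).aestronglyMeasurable (Eventually.of_forall fun x => ?_)
  rw [norm_mul]
  exact mul_le_mul_of_nonneg_left (hC x) (norm_nonneg _)

/-- If the antiderivatives `H ε` converge against Schwartz functions, so do the `h ε`, up to a
nonzero constant factor `c`. The growth conditions make the boundary terms vanish. -/
lemma HasSchwartzLimit.of_hasDerivAt {H h : ℝ → ℝ → ℂ} (hH : HasSchwartzLimit H) {c : ℂ}
    (hc : c ≠ 0) (hHg : ∀ ε > 0, QuadraticGrowth (H ε)) (hhg : ∀ ε > 0, QuadraticGrowth (h ε))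
    (hd : ∀ ε > 0, ∀ x, HasDerivAt (H ε) (c * h ε x) x) : HasSchwartzLimit h := by
  intro f
  obtain ⟨L, hL⟩ := hH (SchwartzMap.derivCLM ℂ ℂ f)
  refine ⟨-c⁻¹ * L, (hL.const_mul (-c⁻¹)).congr' ?_⟩
  filter_upwards [self_mem_nhdsWithin] with ε hε
  have hε : 0 < ε := hε
  have key := integral_mul_deriv_eq_deriv_mul_of_integrable
    (u := f) (v := H ε) (u' := SchwartzMap.derivCLM ℂ ℂ f) (v' := fun x => c * h ε x)
    (fun x _ => f.hasDerivAt x) (fun x _ => hd ε hε x)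
    ((((hhg ε hε).integrable_mul f).const_mul c).congr
      (Eventually.of_forall fun x => by simp only [Pi.mul_apply]; ring))
    ((hHg ε hε).integrable_mul _) ((hHg ε hε).integrable_mul f)
  have e : ∫ x, f x * (c * h ε x) = c * ∫ x, f x * h ε x := by
    rw [← integral_const_mul]
    congr 1
    ext x
    ring
  rw [e] at key
  rw [neg_mul, ← mul_neg, ← key, inv_mul_cancel_left₀ hc]

/-- The point `i (x - iε)`, which lies in the right half-plane when `ε > 0`. -/
noncomputable def rhp (ε x : ℝ) : ℂ := (ε : ℂ) + Complex.I * x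

lemma rhp_re (ε x : ℝ) : (rhp ε x).re = ε := by simp [rhp]

lemma rhp_im (ε x : ℝ) : (rhp ε x).im = x := by simp [rhp]

lemma rhp_mem_slitPlane {ε : ℝ} (hε : 0 < ε) (x : ℝ) : rhp ε x ∈ Complex.slitPlane :=
  Or.inl (by rwa [rhp_re])

lemma rhp_ne_zero {ε : ℝ} (hε : 0 < ε) (x : ℝ) : rhp ε x ≠ 0 :=
  Complex.slitPlane_ne_zero (rhp_mem_slitPlane hε x)

lemma continuous_rhp (ε : ℝ) : Continuous (rhp ε) := by unfold rhp; fun_prop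

lemma norm_rhp_sq (ε x : ℝ) : ‖rhp ε x‖ ^ 2 = ε ^ 2 + x ^ 2 := by
  rw [Complex.sq_norm, Complex.normSq_apply, rhp_re, rhp_im]; ring

lemma le_norm_rhp (ε x : ℝ) : ε ≤ ‖rhp ε x‖ := by
  simpa [rhp_re] using Complex.re_le_norm (rhp ε x)

lemma hasDerivAt_rhp (ε x : ℝ) : HasDerivAt (rhp ε) Complex.I x := by
  have := ((Complex.ofRealCLM.hasDerivAt (x := x)).const_mul Complex.I).const_add (ε : ℂ)
  exact this.congr_deriv (by simp)

lemma norm_log_le (w : ℂ) : ‖Complex.log w‖ ≤ |Real.log ‖w‖| + 4 := by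
  have h := Complex.norm_le_abs_re_add_abs_im (Complex.log w)
  rw [Complex.log_re, Complex.log_im] at h
  linarith [Complex.abs_arg_le_pi w, Real.pi_le_four]

lemma mul_abs_log_le {r : ℝ} (hr : 0 < r) : r * |Real.log r| ≤ 1 + r ^ 2 := by
  rcases le_total r 1 with h | h
  · have := Real.abs_log_mul_self_lt r hr h
    rw [abs_mul, abs_of_pos hr] at this
    nlinarith
  · rw [abs_of_nonneg (Real.log_nonneg h)]
    nlinarith [Real.log_le_sub_one_of_pos hr]

lemma norm_mul_log_sub_le {w : ℂ} (hw : w ≠ 0) :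
    ‖w * Complex.log w - w‖ ≤ 6 * (1 + ‖w‖ ^ 2) := by
  have hr := norm_pos_iff.mpr hw
  have h1 := norm_sub_le (w * Complex.log w) w
  rw [norm_mul] at h1
  have h2 := mul_le_mul_of_nonneg_left (norm_log_le w) hr.le
  nlinarith [mul_abs_log_le hr, sq_nonneg (‖w‖ - 1)]

lemma quadraticGrowth_inv_pow {ε : ℝ} (hε : 0 < ε) (n : ℕ) :
    QuadraticGrowth fun x => (rhp ε x ^ n)⁻¹ := by
  refine ⟨((continuous_rhp ε).pow n).inv₀ fun x => pow_ne_zero _ (rhp_ne_zero hε x),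
    (ε ^ n)⁻¹, fun x => ?_⟩
  rw [norm_inv, norm_pow]
  calc (‖rhp ε x‖ ^ n)⁻¹ ≤ (ε ^ n)⁻¹ := by gcongr; exact le_norm_rhp ε x
    _ ≤ (ε ^ n)⁻¹ * (1 + x ^ 2) :=
      le_mul_of_one_le_right (by positivity) (by nlinarith [sq_nonneg x])

lemma continuous_log_rhp {ε : ℝ} (hε : 0 < ε) : Continuous fun x => Complex.log (rhp ε x) :=
  (continuous_rhp ε).clog (rhp_mem_slitPlane hε)

lemma quadraticGrowth_log {ε : ℝ} (hε : 0 < ε) :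
    QuadraticGrowth fun x => Complex.log (rhp ε x) := by
  refine ⟨continuous_log_rhp hε, (1 + ε ^ 2) / ε + 1 / ε + 4, fun x => ?_⟩
  refine (norm_log_le _).trans ?_
  have hr := norm_pos_iff.mpr (rhp_ne_zero hε x)
  have h1 := mul_abs_log_le hr
  rw [norm_rhp_sq] at h1
  have h2 : |Real.log ‖rhp ε x‖| ≤ (1 + (ε ^ 2 + x ^ 2)) / ε := by
    rw [le_div_iff₀ hε]
    nlinarith [mul_le_mul_of_nonneg_right (le_norm_rhp ε x) (abs_nonneg (Real.log ‖rhp ε x‖))]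
  have h3 : (1 + (ε ^ 2 + x ^ 2)) / ε = (1 + ε ^ 2) / ε + 1 / ε * x ^ 2 := by ring
  have h4 : 0 ≤ (1 + ε ^ 2) / ε := by positivity
  have h5 : 0 ≤ 1 / ε := by positivity
  nlinarith [mul_nonneg h4 (sq_nonneg x), sq_nonneg x]

lemma quadraticGrowth_mul_log_sub {ε : ℝ} (hε : 0 < ε) :
    QuadraticGrowth fun x => rhp ε x * Complex.log (rhp ε x) - rhp ε x := by
  refine ⟨((continuous_rhp ε).mul (continuous_log_rhp hε)).sub (continuous_rhp ε),
    6 * (1 + ε ^ 2), fun x => (norm_mul_log_sub_le (rhp_ne_zero hε x)).trans ?_⟩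
  rw [norm_rhp_sq]
  nlinarith [mul_nonneg (sq_nonneg ε) (sq_nonneg x)]

lemma hasSchwartzLimit_mul_log_sub :
    HasSchwartzLimit fun ε x => rhp ε x * Complex.log (rhp ε x) - rhp ε x := by
  intro f
  refine ⟨∫ x, f x * (rhp 0 x * Complex.log (rhp 0 x) - rhp 0 x),
    tendsto_integral_filter_of_dominated_convergence
      (fun x => ‖f x‖ * (12 * (1 + x ^ 2))) ?_ ?_ (f.integrable_norm_mul_one_add_sq 12) ?_⟩
  · filter_upwards [self_mem_nhdsWithin] with ε hε
    exact ((quadraticGrowth_mul_log_sub hε).integrable_mul f).aestronglyMeasurable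
  · filter_upwards [Ioc_mem_nhdsGT (zero_lt_one' ℝ)] with ε hε
    refine Eventually.of_forall fun x => ?_
    rw [norm_mul]
    refine mul_le_mul_of_nonneg_left ?_ (norm_nonneg _)
    refine (norm_mul_log_sub_le (rhp_ne_zero hε.1 x)).trans ?_
    rw [norm_rhp_sq]
    nlinarith [hε.1, hε.2, sq_nonneg x]
  · -- For `x ≠ 0` the boundary point `i x` still lies in the slit plane.
    filter_upwards [Measure.ae_ne volume (0 : ℝ)] with x hx
    have hc : ContinuousAt (fun ε : ℝ => rhp ε x) 0 := by unfold rhp; fun_prop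
    have hs : rhp 0 x ∈ Complex.slitPlane := Or.inr (by rwa [rhp_im])
    exact ((((hc.mul (hc.clog hs)).sub hc).const_mul (f x)).tendsto).mono_left
      nhdsWithin_le_nhds

lemma hasSchwartzLimit_log : HasSchwartzLimit fun ε x => Complex.log (rhp ε x) := by
  refine hasSchwartzLimit_mul_log_sub.of_hasDerivAt Complex.I_ne_zero
    (fun ε hε => quadraticGrowth_mul_log_sub hε) (fun ε hε => quadraticGrowth_log hε) ?_
  intro ε hε x
  have h := hasDerivAt_rhp ε x
  have h0 := rhp_ne_zero hε x
  refine ((h.mul (h.clog_real (rhp_mem_slitPlane hε x))).sub h).congr_deriv ?_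
  field_simp
  ring

lemma hasSchwartzLimit_inv_pow (n : ℕ) :
    HasSchwartzLimit fun ε x => (rhp ε x ^ (n + 1))⁻¹ := by
  induction n with
  | zero =>
    refine hasSchwartzLimit_log.of_hasDerivAt Complex.I_ne_zero
      (fun ε hε => quadraticGrowth_log hε) (fun ε hε => quadraticGrowth_inv_pow hε _) ?_
    intro ε hε x
    refine ((hasDerivAt_rhp ε x).clog_real (rhp_mem_slitPlane hε x)).congr_deriv ?_
    simp [div_eq_mul_inv]
  | succ n ih =>
    refine ih.of_hasDerivAt (c := -((n + 1 : ℕ) : ℂ) * Complex.I)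
      (mul_ne_zero (neg_ne_zero.mpr (Nat.cast_ne_zero.mpr n.succ_ne_zero)) Complex.I_ne_zero)
      (fun ε hε => quadraticGrowth_inv_pow hε _) (fun ε hε => quadraticGrowth_inv_pow hε _) ?_
    intro ε hε x
    have h0 := rhp_ne_zero hε x
    refine (((hasDerivAt_rhp ε x).pow (n + 1)).inv (pow_ne_zero _ h0)).congr_deriv ?_
    simp only [Nat.add_sub_cancel, Pi.pow_apply]
    field_simp
    ring

/-- For every `n ≥ 1` and every Schwartz function `f : ℝ → ℂ`, the limit as `ε → 0⁺` of
`∫ f(x) · (x − iε)^{−n} dx` exists in `ℂ`. -/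
theorem regularized_inverse_power_limit_exists
    (n : ℕ) (hn : 1 ≤ n) (f : SchwartzMap ℝ ℂ) :
    ∃ L : ℂ,
      Tendsto
        (fun ε : ℝ => ∫ x : ℝ, f x * ((x : ℂ) - Complex.I * ε) ^ (-(n : ℤ)))
        (nhdsWithin 0 (Set.Ioi 0)) (nhds L) := by
  obtain ⟨m, rfl⟩ := Nat.exists_eq_add_of_le' hn
  obtain ⟨L, hL⟩ := hasSchwartzLimit_inv_pow m f
  refine ⟨Complex.I ^ (m + 1) * L, (hL.const_mul (Complex.I ^ (m + 1))).congr fun ε => ?_⟩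
  rw [← integral_const_mul]
  congr 1
  ext x
  have e : rhp ε x = Complex.I * ((x : ℂ) - Complex.I * ε) := by
    rw [rhp, mul_sub, ← mul_assoc, Complex.I_mul_I]; ring
  beta_reduce
  rw [e, zpow_neg, zpow_natCast, mul_pow, mul_inv, mul_left_comm (f x),
    mul_inv_cancel_left₀ (pow_ne_zero _ Complex.I_ne_zero)]
end

section
/- For every Schwartz function f : ℝ → ℂ, the difference of the two boundary-value regularizations of 1/x is 2πi times the Dirac evaluation: lim_{ε→0⁺} ( ∫_ℝ f(x)/(x − iε) dx − ∫_ℝ f(x)/(x + iε) dx ) = 2πi f(0). In particular, whenever f(0) ≠ 0 the two regularizations 1/(x − iε) and 1/(x + iε) have different limits, so they define genuinely different distributions. -/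
/-!
For `ε > 0` the difference of the two integrands is `f x * (2iε / (x² + ε²))`, i.e. `2πi` times the
Poisson kernel of the upper half-plane. Substituting `x = εy` turns its integral into
`∫ f (εy) * (2i / (1 + y²)) dy`. Since `f` is bounded and `1 / (1 + y²)` is integrable with integral
`π`, dominated convergence gives the limit `2πi f(0)`. The second claim follows from the first by
uniqueness of limits.
-/

open MeasureTheory Filter

/-- Any `c` with nonzero imaginary part keeps `x - c` at distance at least `|c.im|` from `0`, so the
regularized integrand is an integrable function times a bounded continuous one. -/
lemma integrable_div_sub (f : SchwartzMap ℝ ℂ) {c : ℂ} (hc : c.im ≠ 0) :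
    Integrable fun x : ℝ => f x / ((x : ℂ) - c) := by
  have hne : ∀ x : ℝ, (x : ℂ) - c ≠ 0 := fun x h => hc (by simpa using congrArg Complex.im h)
  have hcont : Continuous fun x : ℝ => ((x : ℂ) - c)⁻¹ :=
    Continuous.inv₀ (by fun_prop) hne
  have hbound : ∀ x : ℝ, ‖((x : ℂ) - c)⁻¹‖ ≤ |c.im|⁻¹ := fun x => by
    rw [norm_inv]
    refine inv_anti₀ (abs_pos.mpr hc) ?_
    simpa using Complex.abs_im_le_norm ((x : ℂ) - c)
  simpa only [div_eq_mul_inv] using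
    f.integrable.mul_bdd hcont.aestronglyMeasurable (Eventually.of_forall hbound)

lemma integral_sub_integral_eq (f : SchwartzMap ℝ ℂ) {ε : ℝ} (hε : 0 < ε) :
    (∫ x : ℝ, f x / ((x : ℂ) - Complex.I * ε)) - ∫ x : ℝ, f x / ((x : ℂ) + Complex.I * ε) =
      ∫ y : ℝ, f (ε * y) * (2 * Complex.I * ((1 + y ^ 2)⁻¹ : ℝ)) := by
  have h₁ : Integrable fun x : ℝ => f x / ((x : ℂ) - Complex.I * ε) :=
    integrable_div_sub f (by simpa using hε.ne')
  have h₂ : Integrable fun x : ℝ => f x / ((x : ℂ) + Complex.I * ε) := by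
    simpa using integrable_div_sub f (c := -(Complex.I * ε)) (by simpa using hε.ne')
  rw [← integral_sub h₁ h₂]
  have hscale := Measure.integral_comp_mul_left
    (fun x : ℝ => f x / ((x : ℂ) - Complex.I * ε) - f x / ((x : ℂ) + Complex.I * ε)) ε
  rw [abs_of_pos (inv_pos.mpr hε), eq_inv_smul_iff₀ hε.ne', ← integral_smul] at hscale
  rw [← hscale]
  congr 1 with y
  have hε' : (ε : ℂ) ≠ 0 := by exact_mod_cast hε.ne'
  have hm : (y : ℂ) - Complex.I ≠ 0 := fun h => by simpa using congrArg Complex.im h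
  have hp : (y : ℂ) + Complex.I ≠ 0 := fun h => by simpa using congrArg Complex.im h
  have hfac : (1 : ℂ) + (y : ℂ) ^ 2 = (y - Complex.I) * (y + Complex.I) := by
    ring_nf; simp; ring
  have em : ((ε * y : ℝ) : ℂ) - Complex.I * ε = ε * (y - Complex.I) := by push_cast; ring
  have ep : ((ε * y : ℝ) : ℂ) + Complex.I * ε = ε * (y + Complex.I) := by push_cast; ring
  rw [em, ep, Complex.real_smul]
  push_cast
  rw [hfac]
  field_simp
  ring

lemma tendsto_integral_rescaled (f : SchwartzMap ℝ ℂ) :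
    Tendsto (fun ε : ℝ => ∫ y : ℝ, f (ε * y) * (2 * Complex.I * ((1 + y ^ 2)⁻¹ : ℝ)))
      (nhdsWithin 0 (Set.Ioi 0)) (nhds (2 * (Real.pi : ℂ) * Complex.I * f 0)) := by
  have hlim : 2 * (Real.pi : ℂ) * Complex.I * f 0 =
      ∫ y : ℝ, f 0 * (2 * Complex.I * ((1 + y ^ 2)⁻¹ : ℝ)) := by
    rw [integral_const_mul, integral_const_mul, integral_complex_ofReal,
      integral_univ_inv_one_add_sq]
    ring
  rw [hlim]
  have hk : Continuous fun y : ℝ => (1 + y ^ 2)⁻¹ :=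
    Continuous.inv₀ (by fun_prop) fun y => by positivity
  refine tendsto_integral_filter_of_dominated_convergence
    (fun y : ℝ => SchwartzMap.seminorm ℝ 0 0 f * (2 * (1 + y ^ 2)⁻¹)) ?_ ?_ ?_ ?_
  · refine Eventually.of_forall fun ε => Continuous.aestronglyMeasurable ?_
    exact (f.continuous.comp (by fun_prop)).mul
      (continuous_const.mul (Complex.continuous_ofReal.comp hk))
  · refine Eventually.of_forall fun ε => Eventually.of_forall fun y => ?_
    have hpos : 0 ≤ (1 + y ^ 2)⁻¹ := by positivity
    rw [norm_mul, norm_mul, norm_mul, Complex.norm_I, Complex.norm_real, Real.norm_of_nonneg hpos,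
      Complex.norm_ofNat, mul_one]
    gcongr
    exact SchwartzMap.norm_le_seminorm ℝ f _
  · exact (integrable_inv_one_add_sq.const_mul 2).const_mul _
  · refine Eventually.of_forall fun y => Tendsto.mul_const _ ?_
    have : Continuous fun ε : ℝ => f (ε * y) := f.continuous.comp (by fun_prop)
    simpa using (this.tendsto 0).mono_left nhdsWithin_le_nhds

/-- The difference of the two boundary-value regularizations of `1/x` is `2πi` times the
Dirac evaluation:
`lim_{ε→0⁺} ( ∫ f(x)/(x − iε) dx − ∫ f(x)/(x + iε) dx ) = 2πi f(0)`.
In particular, whenever `f(0) ≠ 0`, the two regularizations have different limits. -/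
theorem boundary_value_difference_eq_two_pi_I_delta (f : SchwartzMap ℝ ℂ) :
    Tendsto
      (fun ε : ℝ =>
        (∫ x : ℝ, f x / ((x : ℂ) - Complex.I * ε)) -
        ∫ x : ℝ, f x / ((x : ℂ) + Complex.I * ε))
      (nhdsWithin 0 (Set.Ioi 0))
      (nhds (2 * (Real.pi : ℂ) * Complex.I * f 0)) ∧
    (f 0 ≠ 0 → ∀ L₁ L₂ : ℂ,
      Tendsto (fun ε : ℝ => ∫ x : ℝ, f x / ((x : ℂ) - Complex.I * ε))
        (nhdsWithin 0 (Set.Ioi 0)) (nhds L₁) →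
      Tendsto (fun ε : ℝ => ∫ x : ℝ, f x / ((x : ℂ) + Complex.I * ε))
        (nhdsWithin 0 (Set.Ioi 0)) (nhds L₂) →
      L₁ ≠ L₂) := by
  have key := (tendsto_integral_rescaled f).congr' <| by
    filter_upwards [self_mem_nhdsWithin] with ε hε
    exact (integral_sub_integral_eq f hε).symm
  refine ⟨key, fun hf L₁ L₂ h₁ h₂ h => ?_⟩
  have h0 := tendsto_nhds_unique key (h₁.sub h₂)
  rw [h, sub_self] at h0
  simp [hf, Real.pi_ne_zero] at h0
end

section
/- (Integral representation of the Heaviside function) Fix ε > 0. For every real x > 0, the symmetric improper integral ∫_{−R}^{R} e^{itx}/(t − iε) dt converges as R → ∞ to 2πi·e^{−εx}, and for every real x < 0 it converges to 0. Consequently, for every x ≠ 0, lim_{ε→0⁺} lim_{R→∞} (−i) ∫_{−R}^{R} e^{itx}/(t − iε) dt equals 2π if x > 0 and equals 0 if x < 0. -/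
open MeasureTheory Filter

/-!
Closing the contour in the upper half-plane shows that `∫_{-R}^{R} e^{itx}/(t + iε) dt → 0` for
`x > 0`, as the pole `-iε` lies below the real axis (`tendsto_integral_add_pole`). The case `x < 0`
follows by the reflection `t ↦ -t`. For `x > 0`, no residue is computed: instead,
`1/(t - iε) = 1/(t + iε) + 2iε/(t² + ε²)`, and the last term is `2πi` times the Poisson kernel,
whose Fourier transform is `e^{-ε|x|}` by Fourier inversion (`fourier_exp_neg_abs`,
`integral_exp_mul_poisson`). The limit `ε → 0⁺` is then continuity of the exponential.
-/

/-- Closing the segment `[-R, R]` by a rectangle of height `R` in the upper half-plane, where the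
only pole `-iε` is absent: the top side contributes `O(e^{-Rx})` and each vertical side at most
`1 / (xR)`. -/
lemma tendsto_integral_add_pole {ε x : ℝ} (hε : 0 < ε) (hx : 0 < x) :
    Tendsto (fun R : ℝ => ∫ t in (-R)..R,
      Complex.exp (Complex.I * t * x) / ((t : ℂ) + Complex.I * ε)) atTop (nhds 0) := by
  have hlim : Tendsto (fun R : ℝ => 2 * Real.exp (-(x * R)) + 2 / x * R⁻¹) atTop (nhds 0) := by
    have h1 : Tendsto (fun R : ℝ => Real.exp (-(x * R))) atTop (nhds 0) :=
      Real.tendsto_exp_neg_atTop_nhds_zero.comp (tendsto_id.const_mul_atTop hx)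
    simpa using (h1.const_mul 2).add (tendsto_inv_atTop_zero.const_mul (2 / x))
  refine squeeze_zero_norm' ?_ hlim
  filter_upwards [eventually_gt_atTop 0] with R hR
  set f : ℂ → ℂ := fun z => Complex.exp (Complex.I * z * x) / (z + Complex.I * ε) with hf
  have hne : ∀ z : ℂ, 0 ≤ z.im → z + Complex.I * ε ≠ 0 := by
    intro z hz h
    have := congrArg Complex.im h
    simp at this
    linarith
  have hnum : ∀ z : ℂ, ‖Complex.exp (Complex.I * z * x)‖ = Real.exp (-(x * z.im)) := by
    intro z
    rw [Complex.norm_exp]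
    congr 1
    simp
    ring
  have hrect := Complex.integral_boundary_rect_eq_zero_of_differentiableOn f (-R : ℂ)
    (R + R * Complex.I) (by
      intro z hz
      have hz2 : z.im ∈ Set.uIcc (0 : ℝ) R := by simpa using hz.2
      rw [Set.uIcc_of_le hR.le] at hz2
      have := hne z hz2.1
      apply DifferentiableAt.differentiableWithinAt
      fun_prop (disch := assumption))
  simp only [Complex.neg_re, Complex.neg_im, Complex.ofReal_re, Complex.ofReal_im, Complex.add_re,
    Complex.add_im, Complex.mul_re, Complex.mul_im, Complex.I_re, Complex.I_im, mul_zero, mul_one,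
    sub_zero, add_zero, zero_add, neg_zero, Complex.ofReal_zero, zero_mul, smul_eq_mul] at hrect
  have htop : ‖∫ t in (-R)..R, f (t + R * Complex.I)‖ ≤ 2 * Real.exp (-(x * R)) := by
    have := intervalIntegral.norm_integral_le_of_norm_le_const (a := -R) (b := R)
      (f := fun t : ℝ => f (t + R * Complex.I)) (C := Real.exp (-(x * R)) / R) (by
        intro t _
        have hd : R ≤ ‖(t + R * Complex.I + Complex.I * ε : ℂ)‖ := by
          refine le_trans ?_ (Complex.abs_im_le_norm _)
          simp
          rw [abs_of_pos (by linarith)]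
          linarith
        simp only [hf, norm_div, hnum]
        simp only [Complex.add_im, Complex.ofReal_im, Complex.mul_im, Complex.ofReal_re,
          Complex.I_im, Complex.I_re, mul_one, mul_zero, add_zero, zero_add]
        gcongr)
    refine this.trans_eq ?_
    rw [show R - -R = 2 * R by ring, abs_of_pos (by linarith)]
    field_simp
  have hside : ∀ a : ℝ, |a| = R →
      ‖∫ y in (0 : ℝ)..R, f (a + y * Complex.I)‖ ≤ 1 / x * R⁻¹ := by
    intro a ha
    have h1 : ‖∫ y in (0 : ℝ)..R, f (a + y * Complex.I)‖ ≤
        ∫ y in (0 : ℝ)..R, Real.exp (-x * y) * R⁻¹ := by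
      refine intervalIntegral.norm_integral_le_of_norm_le hR.le ?_
        (Continuous.intervalIntegrable (by fun_prop) _ _)
      refine ae_of_all _ fun y hy => ?_
      have hd : R ≤ ‖(a + y * Complex.I + Complex.I * ε : ℂ)‖ := by
        refine le_trans ?_ (Complex.abs_re_le_norm _)
        simp [ha]
      simp only [hf, norm_div, hnum]
      simp only [Complex.add_im, Complex.ofReal_im, Complex.mul_im, Complex.ofReal_re,
        Complex.I_im, Complex.I_re, mul_one, mul_zero, add_zero, zero_add]
      rw [div_eq_mul_inv, neg_mul]
      gcongr
    refine h1.trans ?_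
    rw [intervalIntegral.integral_mul_const]
    gcongr
    rw [intervalIntegral.integral_comp_mul_left (fun y => Real.exp y) (neg_ne_zero.2 hx.ne'),
      integral_exp, smul_eq_mul, mul_zero, Real.exp_zero]
    have := Real.exp_pos (-x * R)
    rw [inv_neg, neg_mul, ← mul_neg, one_div]
    refine mul_le_of_le_one_right (by positivity) (by linarith)
  have h1 := hside R (abs_of_pos hR)
  have h2 := hside (-R) (by rw [abs_neg, abs_of_pos hR])
  have key : (∫ t in (-R)..R, f t) = (∫ t in (-R)..R, f (t + R * Complex.I))
      - Complex.I * (∫ y in (0 : ℝ)..R, f (R + y * Complex.I))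
      + Complex.I * (∫ y in (0 : ℝ)..R, f ((-R : ℝ) + y * Complex.I)) := by
    linear_combination hrect
  change ‖∫ t in (-R)..R, f t‖ ≤ _
  rw [key]
  refine (norm_add_le _ _).trans ?_
  refine (add_le_add_left (norm_sub_le _ _) _).trans ?_
  simp only [norm_mul, Complex.norm_I, one_mul]
  have : 2 / x * R⁻¹ = 1 / x * R⁻¹ + 1 / x * R⁻¹ := by ring
  linarith

/-- The Poisson kernel of the half-plane at height `ε` is integrable. -/
lemma integrable_poisson {ε : ℝ} (hε : 0 < ε) :
    Integrable (fun t : ℝ => ((Real.pi⁻¹ * ε / (ε ^ 2 + t ^ 2) : ℝ) : ℂ)) := by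
  refine Integrable.ofReal (𝕜 := ℂ) (f := fun t : ℝ => Real.pi⁻¹ * ε / (ε ^ 2 + t ^ 2)) ?_
  have h := ((integrable_inv_one_add_sq.comp_div hε.ne').const_mul (Real.pi⁻¹ * ε⁻¹))
  refine h.congr (ae_of_all _ fun t => ?_)
  have : 0 < ε ^ 2 + t ^ 2 := by positivity
  have : 0 < 1 + (t / ε) ^ 2 := by positivity
  simp only
  field_simp

/-- The scaling `2π` in the exponent makes the transform, in Mathlib's normalisation of the
Fourier transform, the Poisson kernel itself. -/
lemma fourier_exp_neg_abs {ε : ℝ} (hε : 0 < ε) :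
    Integrable (fun s : ℝ => Complex.exp (-(2 * Real.pi * ε * |s| : ℝ))) ∧
    FourierTransform.fourier (fun s : ℝ => Complex.exp (-(2 * Real.pi * ε * |s| : ℝ))) =
      fun w : ℝ => ((Real.pi⁻¹ * ε / (ε ^ 2 + w ^ 2) : ℝ) : ℂ) := by
  have hpi := Real.pi_pos
  have hneg : ∀ w : ℝ, (2 * Real.pi * (-(ε : ℂ) - w * Complex.I)).re < 0 := by
    intro w; simp; positivity
  have hpos : ∀ w : ℝ, 0 < (2 * Real.pi * ((ε : ℂ) - w * Complex.I)).re := by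
    intro w; simp; positivity
  -- On each half-line the integrand is a single complex exponential.
  have eqR : ∀ w : ℝ, Set.EqOn
      (fun s : ℝ => Complex.exp (2 * Real.pi * (-(ε : ℂ) - w * Complex.I) * s))
      (fun s : ℝ => Complex.exp (↑(-2 * Real.pi * s * w) * Complex.I) •
        Complex.exp (-(2 * Real.pi * ε * |s| : ℝ))) (Set.Ioi 0) := by
    intro w s hs
    simp only [smul_eq_mul, ← Complex.exp_add]
    rw [abs_of_pos hs]
    congr 1
    push_cast
    ring
  have eqL : ∀ w : ℝ, Set.EqOn
      (fun s : ℝ => Complex.exp (2 * Real.pi * ((ε : ℂ) - w * Complex.I) * s))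
      (fun s : ℝ => Complex.exp (↑(-2 * Real.pi * s * w) * Complex.I) •
        Complex.exp (-(2 * Real.pi * ε * |s| : ℝ))) (Set.Iic 0) := by
    intro w s hs
    simp only [smul_eq_mul, ← Complex.exp_add]
    rw [abs_of_nonpos hs]
    congr 1
    push_cast
    ring
  have intR := fun w => (integrableOn_exp_mul_complex_Ioi (hneg w) 0).congr_fun (eqR w)
    measurableSet_Ioi
  have intL := fun w => (integrableOn_exp_mul_complex_Iic (hpos w) 0).congr_fun (eqL w)
    measurableSet_Iic
  constructor
  · have := (intL 0).union (intR 0)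
    rw [Set.Iic_union_Ioi, integrableOn_univ] at this
    simpa using this
  · ext w
    rw [Real.fourier_real_eq_integral_exp_smul, ← intervalIntegral.integral_Iic_add_Ioi
      (intL w) (intR w), ← setIntegral_congr_fun measurableSet_Ioi (eqR w),
      ← setIntegral_congr_fun measurableSet_Iic (eqL w),
      integral_exp_mul_complex_Ioi (hneg w), integral_exp_mul_complex_Iic (hpos w)]
    have e1 : (ε : ℂ) - w * Complex.I ≠ 0 := by
      intro h
      have := hpos w
      rw [h] at this
      simp at this
    have e2 : -(ε : ℂ) - w * Complex.I ≠ 0 := by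
      intro h
      have := hneg w
      rw [h] at this
      simp at this
    have e3 : ((ε : ℂ) ^ 2 + w ^ 2) ≠ 0 := by
      have : ε ^ 2 + w ^ 2 ≠ 0 := by positivity
      exact_mod_cast this
    have hpc : (Real.pi : ℂ) ≠ 0 := by exact_mod_cast hpi.ne'
    push_cast
    simp only [mul_zero, Complex.exp_zero]
    field_simp
    ring_nf
    simp only [Complex.I_sq]
    ring

lemma integral_exp_mul_poisson {ε x : ℝ} (hε : 0 < ε) (hx : 0 < x) :
    ∫ t : ℝ, Complex.exp (Complex.I * t * x) * ((Real.pi⁻¹ * ε / (ε ^ 2 + t ^ 2) : ℝ) : ℂ) =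
      Complex.exp (-(ε * x : ℝ)) := by
  have hpi := Real.pi_pos
  have hpc : (Real.pi : ℂ) ≠ 0 := by exact_mod_cast hpi.ne'
  obtain ⟨hint, hfou⟩ := fourier_exp_neg_abs hε
  have hinv := congrFun (Continuous.fourierInv_fourier_eq (by fun_prop) hint
    (hfou ▸ integrable_poisson hε)) (x / (2 * Real.pi))
  rw [hfou, Real.fourierInv_eq'] at hinv
  have hx' : |x / (2 * Real.pi)| = x / (2 * Real.pi) := abs_of_pos (by positivity)
  rw [hx', show 2 * Real.pi * ε * (x / (2 * Real.pi)) = ε * x by field_simp] at hinv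
  rw [← hinv]
  congr 1
  ext t
  simp only [smul_eq_mul]
  congr 2
  simp
  field_simp

/-- For `x > 0` the pole is moved from `iε` to `-iε` at the cost of the absolutely integrable
term `2πi` times the Poisson kernel. -/
lemma tendsto_integral_of_pos {ε x : ℝ} (hε : 0 < ε) (hx : 0 < x) :
    Tendsto (fun R : ℝ => ∫ t in (-R)..R,
      Complex.exp (Complex.I * t * x) / ((t : ℂ) - Complex.I * ε)) atTop
      (nhds (2 * (Real.pi : ℂ) * Complex.I * Complex.exp (-(ε * x : ℝ)))) := by
  have hpc : (Real.pi : ℂ) ≠ 0 := by exact_mod_cast Real.pi_ne_zero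
  have hint : Integrable (fun t : ℝ => Complex.exp (Complex.I * t * x) *
      ((Real.pi⁻¹ * ε / (ε ^ 2 + t ^ 2) : ℝ) : ℂ)) := by
    refine (integrable_poisson hε).bdd_mul (c := 1)
      (Continuous.aestronglyMeasurable (by fun_prop)) (ae_of_all _ fun t => ?_)
    rw [show Complex.I * t * x = ((t * x : ℝ) : ℂ) * Complex.I by push_cast; ring,
      Complex.norm_exp_ofReal_mul_I]
  have hB := intervalIntegral_tendsto_integral hint tendsto_neg_atTop_atBot tendsto_id
  simp only [id_eq, integral_exp_mul_poisson hε hx] at hB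
  have h := (tendsto_integral_add_pole hε hx).add (hB.const_mul (2 * (Real.pi : ℂ) * Complex.I))
  rw [zero_add] at h
  have hp : ∀ t : ℝ, (t : ℂ) + Complex.I * ε ≠ 0 := by
    intro t h
    have := congrArg Complex.im h
    simp at this
    linarith
  have hm : ∀ t : ℝ, (t : ℂ) - Complex.I * ε ≠ 0 := by
    intro t h
    have := congrArg Complex.im h
    simp at this
    linarith
  refine h.congr fun R => ?_
  rw [← intervalIntegral.integral_const_mul, ← intervalIntegral.integral_add]
  · refine intervalIntegral.integral_congr fun t _ => ?_
    have e3 : ((ε : ℂ) ^ 2 + t ^ 2) ≠ 0 := by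
      have : ε ^ 2 + t ^ 2 ≠ 0 := by positivity
      exact_mod_cast this
    have h1 := hp t
    have h2 := hm t
    have hfac : ((ε : ℂ) ^ 2 + t ^ 2) = (t + Complex.I * ε) * (t - Complex.I * ε) := by
      ring_nf
      simp only [Complex.I_sq]
      ring
    push_cast
    rw [hfac]
    field_simp
    ring
  · refine Continuous.intervalIntegrable ?_ _ _
    fun_prop (disch := exact hp _)
  · exact (hint.const_mul _).intervalIntegrable

/-- For `x < 0` the reflection `t ↦ -t` reduces to positive frequency with the pole at `-iε`. -/
lemma tendsto_integral_of_neg {ε x : ℝ} (hε : 0 < ε) (hx : x < 0) :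
    Tendsto (fun R : ℝ => ∫ t in (-R)..R,
      Complex.exp (Complex.I * t * x) / ((t : ℂ) - Complex.I * ε)) atTop (nhds 0) := by
  have h := (tendsto_integral_add_pole hε (neg_pos.2 hx)).neg
  rw [neg_zero] at h
  refine h.congr fun R => ?_
  have := intervalIntegral.integral_comp_neg (a := -R) (b := R)
    (fun t : ℝ => Complex.exp (Complex.I * t * x) / ((t : ℂ) - Complex.I * ε))
  rw [neg_neg] at this
  rw [← this, ← intervalIntegral.integral_neg]
  refine intervalIntegral.integral_congr fun t _ => ?_
  rw [← div_neg]
  congr 1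
  · congr 1; push_cast; ring
  · push_cast; ring

/-- Integral representation of the Heaviside function: for fixed `ε > 0`, the symmetric
truncations `∫_{−R}^{R} e^{itx}/(t − iε) dt` converge as `R → ∞` to `2πi e^{−εx}` when
`x > 0`, and to `0` when `x < 0`. Consequently, for every `x ≠ 0`,
`lim_{ε→0⁺} lim_{R→∞} (−i) ∫_{−R}^{R} e^{itx}/(t − iε) dt` equals `2π` if `x > 0` and
`0` if `x < 0`. -/
theorem heaviside_integral_representation :
    (∀ ε : ℝ, 0 < ε → ∀ x : ℝ, 0 < x →
      Tendsto
        (fun R : ℝ =>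
          ∫ t in Set.Icc (-R) R,
            Complex.exp (Complex.I * t * x) / ((t : ℂ) - Complex.I * ε))
        atTop
        (nhds (2 * (Real.pi : ℂ) * Complex.I * Complex.exp (-(ε * x : ℝ))))) ∧
    (∀ ε : ℝ, 0 < ε → ∀ x : ℝ, x < 0 →
      Tendsto
        (fun R : ℝ =>
          ∫ t in Set.Icc (-R) R,
            Complex.exp (Complex.I * t * x) / ((t : ℂ) - Complex.I * ε))
        atTop (nhds 0)) ∧
    (∀ x : ℝ, x ≠ 0 → ∃ g : ℝ → ℂ,
      (∀ ε : ℝ, 0 < ε →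
        Tendsto
          (fun R : ℝ =>
            (-Complex.I) *
              ∫ t in Set.Icc (-R) R,
                Complex.exp (Complex.I * t * x) / ((t : ℂ) - Complex.I * ε))
          atTop (nhds (g ε))) ∧
      Tendsto g (nhdsWithin 0 (Set.Ioi 0))
        (nhds (if 0 < x then (2 * (Real.pi : ℂ)) else 0))) := by
  have hset : ∀ (F : ℝ → ℂ), (fun R : ℝ => ∫ t in (-R)..R, F t) =ᶠ[atTop]
      fun R : ℝ => ∫ t in Set.Icc (-R) R, F t := by
    intro F
    filter_upwards [eventually_ge_atTop 0] with R hR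
    rw [intervalIntegral.integral_of_le (by linarith), integral_Icc_eq_integral_Ioc]
  have hpos := fun (ε : ℝ) (hε : 0 < ε) (x : ℝ) (hx : 0 < x) =>
    (tendsto_integral_of_pos hε hx).congr' (hset _)
  have hneg := fun (ε : ℝ) (hε : 0 < ε) (x : ℝ) (hx : x < 0) =>
    (tendsto_integral_of_neg hε hx).congr' (hset _)
  refine ⟨hpos, hneg, fun x hx => ?_⟩
  rcases lt_or_gt_of_ne hx with hx | hx
  · refine ⟨fun _ => 0, fun ε hε => ?_, ?_⟩
    · simpa using (hneg ε hε x hx).const_mul (-Complex.I)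
    · simp [hx.not_gt]
  · refine ⟨fun ε => 2 * (Real.pi : ℂ) * Complex.exp (-(ε * x : ℝ)), fun ε hε => ?_, ?_⟩
    · convert (hpos ε hε x hx).const_mul (-Complex.I) using 2
      ring_nf
      simp only [Complex.I_sq]
      ring
    · rw [if_pos hx]
      have hc : Continuous fun ε : ℝ => 2 * (Real.pi : ℂ) * Complex.exp (-(ε * x : ℝ)) := by
        fun_prop
      simpa using (hc.tendsto 0).mono_left nhdsWithin_le_nhds
end

section
/- (Integral representation of the Dirac delta) For every Schwartz function f : ℝ → ℂ, the limit as R → ∞ of ∫_ℝ f(x) · sin(Rx)/x dx equals π f(0). Equivalently, with the paper's convention δ(x) = ∫_ℝ e^{itx} dt (so that ∫_{−R}^{R} e^{itx} dt = 2 sin(Rx)/x), one has lim_{R→∞} ∫_ℝ f(x) (∫_{−R}^{R} e^{itx} dt) dx = 2π f(0). -/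
open MeasureTheory Filter

/-!
For each `R`, Fubini's theorem gives
`∫ f(x) (∫_{-R}^{R} e^{itx} dt) dx = ∫_{-R}^{R} G(t) dt` with `G(t) = ∫ f(x) e^{itx} dx`
(`integral_mul_dirichlet_eq`). The function `G` is the inverse Fourier transform of `f`
evaluated at `t / (2π)` (`fourierInv_rescaled_eq`), hence a rescaled Schwartz function, so it is
integrable, and Fourier inversion at the origin gives `∫ G = 2π f(0)`. The truncated integrals
therefore converge to `2π f(0)`.

The claim with the kernel `sin(Rx)/x` follows because `∫_{-R}^{R} e^{itx} dt = 2 sin(Rx)/x` for all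
`x ≠ 0` (`dirichlet_kernel_eq`), that is, for almost every `x`.
-/

open scoped FourierTransform

/-- Mathlib's Fourier transform uses the character `e^{2πi⟨v, w⟩}`, whence the factor `2π`. -/
lemma fourierInv_rescaled_eq (f : SchwartzMap ℝ ℂ) (t : ℝ) :
    (𝓕⁻ f) (t / (2 * Real.pi)) = ∫ x : ℝ, f x * Complex.exp (Complex.I * t * x) := by
  rw [SchwartzMap.fourierInv_coe, Real.fourierInv_eq']
  refine integral_congr_ae (Eventually.of_forall fun x => ?_)
  have hpi : (Real.pi : ℂ) ≠ 0 := by exact_mod_cast Real.pi_ne_zero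
  simp only [smul_eq_mul]
  rw [mul_comm]
  congr 2
  simp only [RCLike.inner_apply, conj_trivial]
  push_cast
  field_simp

lemma integrable_fourierInv_rescaled (f : SchwartzMap ℝ ℂ) :
    Integrable (fun t : ℝ => (𝓕⁻ f) (t / (2 * Real.pi))) :=
  (𝓕⁻ f).integrable.comp_div (by positivity)

/-- Fourier inversion at the origin, in the normalization with character `e^{itx}`. -/
lemma integral_fourierInv_rescaled (f : SchwartzMap ℝ ℂ) :
    ∫ t : ℝ, (𝓕⁻ f) (t / (2 * Real.pi)) = 2 * (Real.pi : ℂ) * f 0 := by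
  have h0 : ∫ w : ℝ, (𝓕⁻ f) w = f 0 := by
    have h := congrArg (fun g : SchwartzMap ℝ ℂ => g 0)
      (FourierTransform.fourier_fourierInv_eq (F := SchwartzMap ℝ ℂ) f)
    simp only [SchwartzMap.fourier_coe, Real.fourier_eq'] at h
    simpa using h
  have h1 := Measure.integral_comp_div (fun w : ℝ => (𝓕⁻ f) w) (2 * Real.pi)
  rw [h1, h0, abs_of_pos (by positivity)]
  simp

lemma integral_mul_dirichlet_eq (f : SchwartzMap ℝ ℂ) (R : ℝ) :
    ∫ x : ℝ, f x * ∫ t in Set.Icc (-R) R, Complex.exp (Complex.I * t * x) =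
      ∫ t in Set.Icc (-R) R, (𝓕⁻ f) (t / (2 * Real.pi)) := by
  simp_rw [fourierInv_rescaled_eq, ← integral_const_mul]
  refine integral_integral_swap ?_
  -- The integrand has modulus `‖f x‖`, which is integrable against the finite measure in `t`.
  have hf : Integrable (fun p : ℝ × ℝ => f p.1)
      ((volume : Measure ℝ).prod (volume.restrict (Set.Icc (-R) R))) :=
    f.integrable.comp_fst _
  refine hf.mono ?_ (Eventually.of_forall fun p => ?_)
  · have := f.continuous
    exact Continuous.aestronglyMeasurable (by unfold Function.uncurry; fun_prop)
  · have h : Complex.I * p.2 * p.1 = ((p.2 * p.1 : ℝ) : ℂ) * Complex.I := by push_cast; ring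
    simp only [Function.uncurry, norm_mul, h, Complex.norm_exp_ofReal_mul_I, mul_one, le_refl]

lemma dirichlet_kernel_eq {R x : ℝ} (hR : 0 ≤ R) (hx : x ≠ 0) :
    ∫ t in Set.Icc (-R) R, Complex.exp (Complex.I * t * x) =
      2 * ((Real.sin (R * x) / x : ℝ) : ℂ) := by
  have hx' : (x : ℂ) ≠ 0 := by exact_mod_cast hx
  rw [integral_Icc_eq_integral_Ioc, ← intervalIntegral.integral_of_le (by linarith)]
  simp_rw [fun t : ℝ => show Complex.I * t * x = (Complex.I * x) * t by ring]
  rw [integral_exp_mul_complex (mul_ne_zero Complex.I_ne_zero hx')]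
  push_cast
  rw [Complex.sin, div_eq_iff (mul_ne_zero Complex.I_ne_zero hx'),
    show Complex.I * x * -(R : ℂ) = -(R * x) * Complex.I by ring,
    show Complex.I * x * (R : ℂ) = R * x * Complex.I by ring]
  field_simp
  linear_combination (Complex.exp (R * x * Complex.I) - Complex.exp (-(R * x * Complex.I))) *
    Complex.I_sq

/-- Integral representation of the Dirac delta: for every Schwartz function `f`,
`lim_{R→∞} ∫ f(x) sin(Rx)/x dx = π f(0)`; equivalently, with the paper's convention
`δ(x) = ∫ e^{itx} dt`, `lim_{R→∞} ∫ f(x) (∫_{−R}^{R} e^{itx} dt) dx = 2π f(0)`. -/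
theorem dirac_delta_integral_representation (f : SchwartzMap ℝ ℂ) :
    Tendsto
      (fun R : ℝ => ∫ x : ℝ, f x * ((Real.sin (R * x) / x : ℝ) : ℂ))
      atTop (nhds ((Real.pi : ℂ) * f 0)) ∧
    Tendsto
      (fun R : ℝ =>
        ∫ x : ℝ, f x * ∫ t in Set.Icc (-R) R, Complex.exp (Complex.I * t * x))
      atTop (nhds (2 * (Real.pi : ℂ) * f 0)) := by
  have key : Tendsto
      (fun R : ℝ =>
        ∫ x : ℝ, f x * ∫ t in Set.Icc (-R) R, Complex.exp (Complex.I * t * x))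
      atTop (nhds (2 * (Real.pi : ℂ) * f 0)) := by
    rw [← integral_fourierInv_rescaled f]
    refine (intervalIntegral_tendsto_integral (integrable_fourierInv_rescaled f)
      tendsto_neg_atTop_atBot tendsto_id).congr' ?_
    filter_upwards [eventually_ge_atTop 0] with R hR
    rw [integral_mul_dirichlet_eq, integral_Icc_eq_integral_Ioc,
      intervalIntegral.integral_of_le (by simp only [id]; linarith)]
    rfl
  refine ⟨?_, key⟩
  have h := key.const_mul (1 / 2 : ℂ)
  rw [show (1 / 2 : ℂ) * (2 * (Real.pi : ℂ) * f 0) = Real.pi * f 0 by ring] at h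
  refine h.congr' ?_
  filter_upwards [eventually_ge_atTop 0] with R hR
  rw [← integral_const_mul]
  refine integral_congr_ae ?_
  -- At `x = 0` the quotient `sin (R * x) / x` has the junk value `0`, on a null set.
  filter_upwards [Measure.ae_ne volume (0 : ℝ)] with x hx
  rw [dirichlet_kernel_eq hR hx]
  ring
end
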